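/- arXiv:2404.09020 — 2 statements merged into one kernel-verified Lean document; each statement's English description precedes it below -/
import Mathlib

section
/- Let n ≥ 2 and let λ_1,…,λ_n be integers with 1 ≤ λ_j ≤ j for each 1 ≤ j ≤ n. Define the n-tuple of quadratic forms Q = (Q_1,…,Q_n) on ℝ^n by Q_j(ξ) = ξ_{λ_j} ξ_j, and for each 1 ≤ j ≤ n set w_j = #{1 ≤ i ≤ n : λ_i = j}. Suppose that for some exponents p, q ∈ [1,∞] there exists a finite constant C such that ‖E^Q f‖_{L^q(ℝ^{2n})} ≤ C ‖f‖_{L^p([0,1]^n)} for every measurable function f : [0,1]^n → ℂ. Then necessarily q ≥ max_j w_j + 3 and 1/p + (max_j w_j + 2)/q ≤ 1. -/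
open MeasureTheory
open scoped ENNReal

/-- The extension operator associated to the quadratic surface
`S_Q = {(ξ, Q ξ) : ξ ∈ [0,1]^d} ⊆ ℝ^{d+n}`. -/
noncomputable def extOp (d n : ℕ) (Q : (Fin d → ℝ) → Fin n → ℝ)
    (f : (Fin d → ℝ) → ℂ) (x : Fin (d + n) → ℝ) : ℂ :=
  ∫ ξ in Set.Icc (0 : Fin d → ℝ) 1,
    Complex.exp (2 * (Real.pi : ℂ) * Complex.I *
      ((((∑ i : Fin d, x (Fin.castAdd n i) * ξ i) +
        ∑ j : Fin n, x (Fin.natAdd d j) * Q ξ j : ℝ)) : ℂ)) * f ξ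

namespace S17

/-- the slab `ξ_m ∈ [a, a+δ)` of the unit cube -/
def slab (n : ℕ) (m : Fin n) (a δ : ℝ) : Set (Fin n → ℝ) :=
  Set.univ.pi (fun i => if i = m then Set.Ico a (a + δ) else Set.Icc 0 1)

lemma measurableSet_slab (n : ℕ) (m : Fin n) (a δ : ℝ) : MeasurableSet (slab n m a δ) := by
  refine MeasurableSet.univ_pi fun i => ?_
  split_ifs
  · exact measurableSet_Ico
  · exact measurableSet_Icc

lemma volume_slab (n : ℕ) (m : Fin n) (a δ : ℝ) :
    volume (slab n m a δ) = ENNReal.ofReal δ := by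
  rw [slab, volume_pi_pi]
  have : ∀ i : Fin n, volume (if i = m then Set.Ico a (a + δ) else Set.Icc (0 : ℝ) 1)
      = if i = m then ENNReal.ofReal δ else 1 := by
    intro i
    split_ifs <;> simp
  simp [this]

lemma mem_slab {n : ℕ} {m : Fin n} {a δ : ℝ} {ξ : Fin n → ℝ} (h : ξ ∈ slab n m a δ) :
    (a ≤ ξ m ∧ ξ m < a + δ) ∧ ∀ i, i ≠ m → 0 ≤ ξ i ∧ ξ i ≤ 1 := by
  simp only [slab, Set.mem_univ_pi] at h
  refine ⟨by simpa using h m, fun i hi => by simpa [hi] using h i⟩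

lemma slab_subset {n : ℕ} {m : Fin n} {a δ : ℝ} (ha : 0 ≤ a) (had : a + δ ≤ 1) :
    slab n m a δ ⊆ Set.Icc 0 1 := by
  intro ξ hξ
  obtain ⟨h1, h2⟩ := mem_slab hξ
  constructor
  · intro i
    by_cases hi : i = m
    · subst hi; simp; linarith
    · simpa using (h2 i hi).1
  · intro i
    by_cases hi : i = m
    · subst hi; simp; linarith
    · simpa using (h2 i hi).2

/-- side lengths -/
def side {n : ℕ} (m : Fin n) (δ : ℝ) (i : Fin n) : ℝ := if i = m then δ else 1

lemma side_pos {n : ℕ} (m : Fin n) {δ : ℝ} (hδ : 0 < δ) (i : Fin n) : 0 < side m δ i := by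
  unfold side; split_ifs <;> simp [hδ]

/-- sheared coordinate -/
def shear {n : ℕ} (lam : Fin n → Fin n) (m : Fin n) (a : ℝ) (y : Fin n → ℝ) (i : Fin n) : ℝ :=
  a * ((if lam i = m then y i else 0) + (if lam m = i then y m else 0))

lemma measurable_shear {n : ℕ} (lam : Fin n → Fin n) (m : Fin n) (a : ℝ) :
    Measurable (shear lam m a) := by
  refine measurable_pi_lambda _ fun i => ?_
  unfold shear
  split_ifs <;> fun_prop

/-- the plank in frequency-dual space -/
def plank {n : ℕ} (lam : Fin n → Fin n) (m : Fin n) (a δ c : ℝ) : Set (Fin (n + n) → ℝ) :=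
  {z | (∀ i, |z (Fin.castAdd n i) + shear lam m a (fun j => z (Fin.natAdd n j)) i|
        ≤ c / side m δ i) ∧
    ∀ j, |z (Fin.natAdd n j)| ≤ c / (side m δ (lam j) * side m δ j)}

/-- symmetric box -/
def box {n : ℕ} (r : Fin n → ℝ) : Set (Fin n → ℝ) := Set.univ.pi fun i => Set.Icc (-(r i)) (r i)

lemma measurableSet_box {n : ℕ} (r : Fin n → ℝ) : MeasurableSet (box r) :=
  MeasurableSet.univ_pi fun _ => measurableSet_Icc

lemma volume_box {n : ℕ} (r : Fin n → ℝ) (hr : ∀ i, 0 ≤ r i) :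
    volume (box r) = ENNReal.ofReal (∏ i, (2 * r i)) := by
  rw [box, volume_pi_pi, ENNReal.ofReal_prod_of_nonneg (fun i _ => by have := hr i; positivity)]
  refine Finset.prod_congr rfl fun i _ => ?_
  rw [Real.volume_Icc]; congr 1; ring

lemma mem_box {n : ℕ} {r : Fin n → ℝ} {x : Fin n → ℝ} : x ∈ box r ↔ ∀ i, |x i| ≤ r i := by
  simp only [box, Set.mem_univ_pi, Set.mem_Icc, abs_le]

/-- gluing coordinates -/
noncomputable def glue (n : ℕ) : ((Fin n → ℝ) × (Fin n → ℝ)) ≃ᵐ (Fin (n + n) → ℝ) :=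
  (MeasurableEquiv.sumPiEquivProdPi (fun _ : Fin n ⊕ Fin n => ℝ)).symm.trans
    (MeasurableEquiv.piCongrLeft (fun _ : Fin (n + n) => ℝ) finSumFinEquiv)

lemma glue_mp (n : ℕ) : MeasurePreserving (glue n) volume volume := by
  have h1 := volume_measurePreserving_sumPiEquivProdPi_symm (fun _ : Fin n ⊕ Fin n => ℝ)
  have h2 := volume_measurePreserving_piCongrLeft (fun _ : Fin (n + n) => ℝ)
    (finSumFinEquiv : Fin n ⊕ Fin n ≃ Fin (n + n))
  exact h2.comp h1

lemma glue_castAdd (n : ℕ) (v : (Fin n → ℝ) × (Fin n → ℝ)) (i : Fin n) :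
    glue n v (Fin.castAdd n i) = v.1 i := by
  have := MeasurableEquiv.piCongrLeft_apply_apply (β := fun _ : Fin (n + n) => ℝ)
    (finSumFinEquiv : Fin n ⊕ Fin n ≃ Fin (n + n))
    ((MeasurableEquiv.sumPiEquivProdPi (fun _ : Fin n ⊕ Fin n => ℝ)).symm v) (Sum.inl i)
  exact this

lemma glue_natAdd (n : ℕ) (v : (Fin n → ℝ) × (Fin n → ℝ)) (i : Fin n) :
    glue n v (Fin.natAdd n i) = v.2 i := by
  have := MeasurableEquiv.piCongrLeft_apply_apply (β := fun _ : Fin (n + n) => ℝ)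
    (finSumFinEquiv : Fin n ⊕ Fin n ≃ Fin (n + n))
    ((MeasurableEquiv.sumPiEquivProdPi (fun _ : Fin n ⊕ Fin n => ℝ)).symm v) (Sum.inr i)
  exact this

lemma measurableSet_plank {n : ℕ} (lam : Fin n → Fin n) (m : Fin n) (a δ c : ℝ) :
    MeasurableSet (plank lam m a δ c) := by
  unfold plank
  have hs : Measurable fun z : Fin (n + n) → ℝ =>
      shear lam m a (fun j => z (Fin.natAdd n j)) :=
    (measurable_shear lam m a).comp (by fun_prop)
  refine MeasurableSet.inter ?_ ?_
  · refine MeasurableSet.congr (s := ⋂ i, {z : Fin (n + n) → ℝ |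
      |z (Fin.castAdd n i) + shear lam m a (fun j => z (Fin.natAdd n j)) i|
        ≤ c / side m δ i}) (MeasurableSet.iInter fun i => ?_) 
      (by ext; simp only [Set.mem_iInter]; rfl)
    have hi : Measurable fun z : Fin (n + n) → ℝ =>
      shear lam m a (fun j => z (Fin.natAdd n j)) i := measurable_pi_iff.1 hs i
    refine measurableSet_le ?_ measurable_const
    exact Measurable.abs (by fun_prop)
  · refine MeasurableSet.congr (s := ⋂ j, {z : Fin (n + n) → ℝ |
      |z (Fin.natAdd n j)| ≤ c / (side m δ (lam j) * side m δ j)})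
      (MeasurableSet.iInter fun i => ?_) 
      (by ext; simp only [Set.mem_iInter]; rfl)
    refine measurableSet_le ?_ measurable_const
    exact Measurable.abs (by fun_prop)

lemma volume_plank_aux {n : ℕ} (lam : Fin n → Fin n) (m : Fin n) (a δ c : ℝ) :
    volume (plank lam m a δ c) = volume (box fun i => c / side m δ i) *
      volume (box fun j => c / (side m δ (lam j) * side m δ j)) := by
  have hm := measurableSet_plank lam m a δ c
  rw [← (glue_mp n).measure_preimage hm.nullMeasurableSet, Measure.volume_eq_prod,
    Measure.prod_apply_symm ((glue n).measurable hm),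
    ← lintegral_indicator_const (measurableSet_box _)]
  refine lintegral_congr fun y => ?_
  by_cases hy : y ∈ box fun j => c / (side m δ (lam j) * side m δ j)
  · rw [Set.indicator_of_mem hy,
      ← measure_preimage_add_right volume (shear lam m a y) (box fun i => c / side m δ i)]
    congr 1
    ext x
    rw [mem_box] at hy
    rw [Set.mem_preimage, Set.mem_preimage, Set.mem_preimage, mem_box]
    change (_ ∧ _) ↔ _
    simp only [glue_castAdd, glue_natAdd]
    exact ⟨fun h => h.1, fun h => ⟨h, hy⟩⟩
  · rw [Set.indicator_of_notMem hy]
    convert measure_empty (μ := (volume : Measure (Fin n → ℝ)))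
    ext x
    rw [mem_box] at hy
    rw [Set.mem_preimage, Set.mem_preimage]
    simp only [Set.mem_empty_iff_false, iff_false]
    intro h
    have h2 := h.2
    simp only [glue_natAdd] at h2
    exact hy h2

lemma prod_side {n : ℕ} (m : Fin n) (δ : ℝ) : ∏ i, side m δ i = δ := by
  simp [side]

lemma prod_side_lam {n : ℕ} (lam : Fin n → Fin n) (m : Fin n) (δ : ℝ) :
    ∏ i, side m δ (lam i) = δ ^ (Finset.univ.filter (fun i => lam i = m)).card := by
  simp [side, Finset.prod_ite]

lemma volume_plank {n : ℕ} (lam : Fin n → Fin n) (m : Fin n) (a δ c : ℝ) (hδ : 0 < δ)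
    (hc : 0 < c) :
    volume (plank lam m a δ c) = ENNReal.ofReal ((2 * c) ^ (2 * n) /
      δ ^ ((Finset.univ.filter (fun i => lam i = m)).card + 2)) := by
  have hs := side_pos m hδ
  rw [volume_plank_aux, volume_box _ (fun i => by have := hs i; positivity),
    volume_box _ (fun i => by have := hs i; have := hs (lam i); positivity),
    ← ENNReal.ofReal_mul (Finset.prod_nonneg fun i _ => by have := hs i; positivity)]
  congr 1
  simp only [← mul_div_assoc, Finset.prod_div_distrib, Finset.prod_mul_distrib, prod_side,
    prod_side_lam]
  simp
  field_simp
  ring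

end S17

namespace S17

/-- the phase -/
def phase {n : ℕ} (lam : Fin n → Fin n) (z : Fin (n + n) → ℝ) (ξ : Fin n → ℝ) : ℝ :=
  (∑ i : Fin n, z (Fin.castAdd n i) * ξ i) +
        ∑ j : Fin n, z (Fin.natAdd n j) * (ξ (lam j) * ξ j)

lemma continuous_phase {n : ℕ} (lam : Fin n → Fin n) :
    Continuous fun v : (Fin (n + n) → ℝ) × (Fin n → ℝ) => phase lam v.1 v.2 := by
  unfold phase; fun_prop

/-- short name for the operator -/
noncomputable def E {n : ℕ} (lam : Fin n → Fin n) (f : (Fin n → ℝ) → ℂ) (z : Fin (n + n) → ℝ) : ℂ :=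
  ∫ ξ in Set.Icc (0 : Fin n → ℝ) 1,
    Complex.exp (2 * (Real.pi : ℂ) * Complex.I * ((phase lam z ξ : ℝ) : ℂ)) * f ξ

lemma extOp_eq {n : ℕ} (lam : Fin n → Fin n) (f : (Fin n → ℝ) → ℂ) :
    extOp n n (fun ξ j => ξ (lam j) * ξ j) f = E lam f := rfl

lemma measurable_E {n : ℕ} (lam : Fin n → Fin n) {f : (Fin n → ℝ) → ℂ} (hf : Measurable f) :
    Measurable (E lam f) := by
  refine StronglyMeasurable.measurable (StronglyMeasurable.integral_prod_right ?_)
  refine Measurable.stronglyMeasurable ?_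
  have := (continuous_phase lam).measurable
  refine Measurable.mul ?_ (hf.comp measurable_snd)
  refine Complex.measurable_exp.comp ?_
  exact (Complex.measurable_ofReal.comp this).const_mul _

lemma norm_char (t : ℝ) : ‖Complex.exp (2 * (Real.pi : ℂ) * Complex.I * (t : ℂ))‖ = 1 := by
  have : 2 * (Real.pi : ℂ) * Complex.I * (t : ℂ) = ((2 * Real.pi * t : ℝ) : ℂ) * Complex.I := by
    push_cast; ring
  rw [this, Complex.norm_exp_ofReal_mul_I]

lemma integrable_E {n : ℕ} (lam : Fin n → Fin n) {f : (Fin n → ℝ) → ℂ} (hf : Measurable f)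
    (hb : ∀ ξ, ‖f ξ‖ ≤ 1) (z : Fin (n + n) → ℝ) :
    IntegrableOn (fun ξ => Complex.exp (2 * (Real.pi : ℂ) * Complex.I *
      ((phase lam z ξ : ℝ) : ℂ)) * f ξ) (Set.Icc (0 : Fin n → ℝ) 1) := by
  have hp : Continuous (phase lam z) := by unfold phase; fun_prop
  refine Measure.integrableOn_of_bounded (M := 1) (isCompact_Icc.measure_lt_top).ne ?_ ?_
  · refine Measurable.aestronglyMeasurable (Measurable.mul ?_ hf)
    exact Complex.measurable_exp.comp
      ((Complex.measurable_ofReal.comp hp.measurable).const_mul _)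
  · refine ae_of_all _ fun ξ => ?_
    rw [norm_mul, norm_char, one_mul]; exact hb ξ

lemma E_add {n : ℕ} (lam : Fin n → Fin n) {f g : (Fin n → ℝ) → ℂ} (hf : Measurable f)
    (hb : ∀ ξ, ‖f ξ‖ ≤ 1) (hg : Measurable g) (hgb : ∀ ξ, ‖g ξ‖ ≤ 1) (z : Fin (n + n) → ℝ) :
    E lam (fun ξ => f ξ + g ξ) z = E lam f z + E lam g z := by
  unfold E
  rw [← integral_add (integrable_E lam hf hb z) (integrable_E lam hg hgb z)]
  simp only [mul_add]

lemma E_sub {n : ℕ} (lam : Fin n → Fin n) {f g : (Fin n → ℝ) → ℂ} (hf : Measurable f)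
    (hb : ∀ ξ, ‖f ξ‖ ≤ 1) (hg : Measurable g) (hgb : ∀ ξ, ‖g ξ‖ ≤ 1) (z : Fin (n + n) → ℝ) :
    E lam (fun ξ => f ξ - g ξ) z = E lam f z - E lam g z := by
  unfold E
  rw [← integral_sub (integrable_E lam hf hb z) (integrable_E lam hg hgb z)]
  simp only [mul_sub]

lemma phase_shift {n : ℕ} (lam : Fin n → Fin n) (m : Fin n) (a : ℝ) (z : Fin (n + n) → ℝ)
    (η : Fin n → ℝ) :
    phase lam z (fun i => η i + if i = m then a else 0) =
      phase lam z (fun i => if i = m then a else 0) +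
      ((∑ i, (z (Fin.castAdd n i) + shear lam m a (fun j => z (Fin.natAdd n j)) i) * η i) +
        ∑ j : Fin n, z (Fin.natAdd n j) * (η (lam j) * η j)) := by
  have h1 : ∑ i, (if lam m = i then z (Fin.natAdd n m) else 0) * η i
      = ∑ j, z (Fin.natAdd n j) * (η (lam j) * if j = m then 1 else 0) := by
    simp
  have h2 : ∑ i, (z (Fin.castAdd n i) + shear lam m a (fun j => z (Fin.natAdd n j)) i) * η i
      = ∑ i, z (Fin.castAdd n i) * η i +
        (∑ i, a * ((if lam i = m then z (Fin.natAdd n i) else 0) * η i)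
          + a * ∑ i, (if lam m = i then z (Fin.natAdd n m) else 0) * η i) := by
    rw [Finset.mul_sum, ← Finset.sum_add_distrib, ← Finset.sum_add_distrib]
    refine Finset.sum_congr rfl fun i _ => ?_
    unfold shear; ring
  rw [h2, h1, Finset.mul_sum]
  unfold phase
  simp only [← Finset.sum_add_distrib]
  refine Finset.sum_congr rfl fun i _ => ?_
  split_ifs <;> ring

lemma phase_close {n : ℕ} (lam : Fin n → Fin n) (m : Fin n) (a δ c : ℝ) (hδ : 0 < δ)
    (hc : 0 < c) {z : Fin (n + n) → ℝ} (hz : z ∈ plank lam m a δ c) {ξ : Fin n → ℝ}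
    (hξ : ξ ∈ slab n m a δ) :
    |phase lam z ξ - phase lam z (fun i => if i = m then a else 0)| ≤ 2 * n * c := by
  obtain ⟨h1, h2⟩ := mem_slab hξ
  set η : Fin n → ℝ := fun i => ξ i - if i = m then a else 0 with hη
  have hs := side_pos m hδ
  have hηb : ∀ i, |η i| ≤ side m δ i := by
    intro i
    by_cases hi : i = m
    · subst hi
      simp only [hη, side, if_true]
      rw [abs_le]; constructor <;> linarith
    · simp only [hη, side, if_neg hi, sub_zero]
      have := h2 i hi
      rw [abs_le]; constructor <;> linarith
  have hξη : ξ = fun i => η i + if i = m then a else 0 := by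
    ext i; simp [hη]
  rw [hξη, phase_shift, add_sub_cancel_left]
  obtain ⟨hz1, hz2⟩ := hz
  have e1 : |∑ i, (z (Fin.castAdd n i) + shear lam m a (fun j => z (Fin.natAdd n j)) i) * η i|
      ≤ ∑ _i : Fin n, c := by
    refine (Finset.abs_sum_le_sum_abs _ _).trans (Finset.sum_le_sum fun i _ => ?_)
    rw [abs_mul]
    calc _ ≤ c / side m δ i * side m δ i :=
          mul_le_mul (hz1 i) (hηb i) (abs_nonneg _) (by have := hs i; positivity)
      _ = c := div_mul_cancel₀ _ (hs i).ne'
  have e2 : |∑ j : Fin n, z (Fin.natAdd n j) * (η (lam j) * η j)| ≤ ∑ _i : Fin n, c := by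
    refine (Finset.abs_sum_le_sum_abs _ _).trans (Finset.sum_le_sum fun i _ => ?_)
    have p1 := hs i
    have p2 := hs (lam i)
    rw [abs_mul, abs_mul]
    calc _ ≤ c / (side m δ (lam i) * side m δ i) * (side m δ (lam i) * side m δ i) :=
          mul_le_mul (hz2 i) (mul_le_mul (hηb _) (hηb i) (abs_nonneg _) p2.le) (by positivity)
            (by positivity)
      _ = c := div_mul_cancel₀ _ (by positivity)
  refine (abs_add_le _ _).trans ((add_le_add e1 e2).trans ?_)
  simp; linarith

lemma E_lower {n : ℕ} (hn : 0 < n) (lam : Fin n → Fin n) (m : Fin n) (a δ : ℝ) (hδ : 0 < δ)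
    (ha : 0 ≤ a) (had : a + δ ≤ 1) {z : Fin (n + n) → ℝ}
    (hz : z ∈ plank lam m a δ (1 / (32 * n))) :
    δ / 2 ≤ ‖E lam ((slab n m a δ).indicator fun _ => 1) z‖ := by
  have hn' : (0 : ℝ) < n := by exact_mod_cast hn
  set θ := phase lam z (fun i => if i = m then a else 0) with hθ
  have hreal : volume.real (slab n m a δ) = δ := by
    rw [Measure.real, volume_slab, ENNReal.toReal_ofReal hδ.le]
  have hE : E lam ((slab n m a δ).indicator fun _ => 1) z =
      ∫ ξ in slab n m a δ, Complex.exp (2 * (Real.pi : ℂ) * Complex.I *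
        ((phase lam z ξ : ℝ) : ℂ)) := by
    unfold E
    have : ∀ ξ, Complex.exp (2 * (Real.pi : ℂ) * Complex.I * ((phase lam z ξ : ℝ) : ℂ)) *
        (slab n m a δ).indicator (fun _ => (1 : ℂ)) ξ = (slab n m a δ).indicator (fun ξ =>
          Complex.exp (2 * (Real.pi : ℂ) * Complex.I * ((phase lam z ξ : ℝ) : ℂ))) ξ := by
      intro ξ
      by_cases h : ξ ∈ slab n m a δ <;> simp [h]
    simp only [this]
    rw [setIntegral_indicator (measurableSet_slab n m a δ),
      Set.inter_eq_right.2 (slab_subset ha had)]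
  have hfin : volume (slab n m a δ) < ⊤ := by rw [volume_slab]; exact ENNReal.ofReal_lt_top
  have hint : IntegrableOn (fun ξ => Complex.exp (2 * (Real.pi : ℂ) * Complex.I *
        ((phase lam z ξ : ℝ) : ℂ))) (slab n m a δ) := by
    have := (integrable_E lam (f := fun _ => 1) measurable_const (by simp) z).mono_set
      (slab_subset (m := m) ha had)
    simpa using this
  have hdiff : ‖∫ ξ in slab n m a δ, (Complex.exp (2 * (Real.pi : ℂ) * Complex.I *
        ((phase lam z ξ : ℝ) : ℂ)) - Complex.exp (2 * (Real.pi : ℂ) * Complex.I * (θ : ℂ)))‖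
        ≤ 1 / 2 * volume.real (slab n m a δ) := by
    refine norm_setIntegral_le_of_norm_le_const hfin fun ξ hξ => ?_
    have hcl := phase_close lam m a δ (1 / (32 * n)) hδ (by positivity) hz hξ
    rw [← hθ] at hcl
    have : Complex.exp (2 * (Real.pi : ℂ) * Complex.I * ((phase lam z ξ : ℝ) : ℂ)) -
        Complex.exp (2 * (Real.pi : ℂ) * Complex.I * (θ : ℂ)) =
        Complex.exp (2 * (Real.pi : ℂ) * Complex.I * (θ : ℂ)) *
        (Complex.exp (Complex.I * ((2 * Real.pi * (phase lam z ξ - θ) : ℝ) : ℂ)) - 1) := by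
      rw [mul_sub, ← Complex.exp_add, mul_one]
      congr 2
      push_cast; ring
    rw [this, norm_mul, norm_char, one_mul]
    refine Real.norm_exp_I_mul_ofReal_sub_one_le.trans ?_
    rw [Real.norm_eq_abs, abs_mul, abs_of_pos (by positivity)]
    have e : 2 * (n : ℝ) * (1 / (32 * n)) = 1 / 16 := by field_simp; norm_num
    rw [e] at hcl
    have := Real.pi_lt_four
    have := Real.pi_pos
    nlinarith [abs_nonneg (phase lam z ξ - θ)]
  rw [integral_sub hint (integrableOn_const hfin.ne), setIntegral_const, hreal] at hdiff
  rw [hE]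
  have h3 : ‖(δ : ℝ) • Complex.exp (2 * (Real.pi : ℂ) * Complex.I * (θ : ℂ))‖ = δ := by
    rw [norm_smul, norm_char, mul_one, Real.norm_eq_abs, abs_of_pos hδ]
  have h4 := norm_sub_norm_le ((δ : ℝ) • Complex.exp (2 * (Real.pi : ℂ) * Complex.I * (θ : ℂ)))
    (∫ ξ in slab n m a δ, Complex.exp (2 * (Real.pi : ℂ) * Complex.I *
        ((phase lam z ξ : ℝ) : ℂ)))
  rw [norm_sub_rev] at h4
  linarith

/-- the q-th power integral -/
noncomputable def I {n : ℕ} (lam : Fin n → Fin n) (q : ℝ) (f : (Fin n → ℝ) → ℂ) : ℝ≥0∞ :=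
  ∫⁻ z, ‖E lam f z‖ₑ ^ q

lemma I_lower {n : ℕ} (hn : 0 < n) (lam : Fin n → Fin n) (m : Fin n) (a δ : ℝ) (hδ : 0 < δ)
    (ha : 0 ≤ a) (had : a + δ ≤ 1) (q : ℝ) (hq : 0 < q) :
    ENNReal.ofReal ((δ / 2) ^ q * ((2 * (1 / (32 * n))) ^ (2 * n) /
      δ ^ ((Finset.univ.filter (fun i => lam i = m)).card + 2))) ≤
      I lam q ((slab n m a δ).indicator fun _ => 1) := by
  have hn' : (0 : ℝ) < n := by exact_mod_cast hn
  rw [ENNReal.ofReal_mul (by positivity), ← volume_plank lam m a δ _ hδ (by positivity),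
    ← lintegral_indicator_const (measurableSet_plank ..)]
  refine lintegral_mono fun z => ?_
  by_cases hz : z ∈ plank lam m a δ (1 / (32 * n))
  · rw [Set.indicator_of_mem hz, ← ENNReal.ofReal_rpow_of_pos (by positivity)]
    refine ENNReal.rpow_le_rpow ?_ hq.le
    rw [← ofReal_norm]
    exact ENNReal.ofReal_le_ofReal (E_lower hn lam m a δ hδ ha had hz)
  · rw [Set.indicator_of_notMem hz]; exact zero_le

lemma clarkson (u v : ℂ) (q : ℝ) (hq : 2 ≤ q) :
    2 * (‖u‖ₑ ^ q + ‖v‖ₑ ^ q) ≤ ‖u + v‖ₑ ^ q + ‖u - v‖ₑ ^ q := by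
  have hpow : ∀ x : ℂ, ‖x‖ₑ ^ q = ENNReal.ofReal ((‖x‖ ^ 2) ^ (q / 2)) := by
    intro x
    rw [← ofReal_norm, ENNReal.ofReal_rpow_of_nonneg (norm_nonneg _) (by linarith),
      ← Real.rpow_natCast, ← Real.rpow_mul (norm_nonneg _)]
    congr 2
    push_cast; ring
  have ht : 1 ≤ q / 2 := by linarith
  have hpar := parallelogram_law_with_norm ℝ u v
  have key : 2 * ((‖u‖ ^ 2) ^ (q / 2) + (‖v‖ ^ 2) ^ (q / 2)) ≤
      (‖u + v‖ ^ 2) ^ (q / 2) + (‖u - v‖ ^ 2) ^ (q / 2) := by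
    have h1 := Real.add_rpow_le_rpow_add (sq_nonneg ‖u‖) (sq_nonneg ‖v‖) ht
    have h2 := (convexOn_rpow ht).2 (Set.mem_Ici.2 (sq_nonneg ‖u + v‖))
      (Set.mem_Ici.2 (sq_nonneg ‖u - v‖)) (show (0 : ℝ) ≤ 1 / 2 by norm_num)
      (show (0 : ℝ) ≤ 1 / 2 by norm_num) (by norm_num)
    simp only [smul_eq_mul] at h2
    have h3 : 1 / 2 * ‖u + v‖ ^ 2 + 1 / 2 * ‖u - v‖ ^ 2 = ‖u‖ ^ 2 + ‖v‖ ^ 2 := by linarith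
    rw [h3] at h2
    linarith
  rw [hpow, hpow, hpow, hpow, ← ENNReal.ofReal_add (by positivity) (by positivity),
    ← ENNReal.ofReal_add (by positivity) (by positivity)]
  have : (2 : ℝ≥0∞) = ENNReal.ofReal 2 := by simp
  rw [this, ← ENNReal.ofReal_mul (by norm_num)]
  exact ENNReal.ofReal_le_ofReal key

lemma I_clarkson {n : ℕ} (lam : Fin n → Fin n) (q : ℝ) (hq : 2 ≤ q)
    {f g : (Fin n → ℝ) → ℂ} (hf : Measurable f)
    (hb : ∀ ξ, ‖f ξ‖ ≤ 1) (hg : Measurable g) (hgb : ∀ ξ, ‖g ξ‖ ≤ 1) :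
    I lam q f + I lam q g ≤ I lam q (fun ξ => f ξ + g ξ) ∨
    I lam q f + I lam q g ≤ I lam q (fun ξ => f ξ - g ξ) := by
  have h : 2 * (I lam q f + I lam q g) ≤
      I lam q (fun ξ => f ξ + g ξ) + I lam q (fun ξ => f ξ - g ξ) := by
    unfold I
    have m1 : ∀ {f : (Fin n → ℝ) → ℂ}, Measurable f → Measurable fun z => ‖E lam f z‖ₑ ^ q :=
      fun hf => (measurable_E lam hf).enorm.pow_const q
    rw [← lintegral_add_left (m1 hf), ← lintegral_add_left (m1 (f := fun ξ => f ξ + g ξ) (hf.add hg)),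
      ← lintegral_const_mul' _ _ (by norm_num)]
    refine lintegral_mono fun z => ?_
    simp only [E_add lam hf hb hg hgb, E_sub lam hf hb hg hgb]
    exact clarkson _ _ q hq
  by_contra! hcon
  have := ENNReal.add_lt_add hcon.1 hcon.2
  rw [← two_mul] at this
  exact absurd h (not_le.2 this)

lemma exists_signs {n : ℕ} (lam : Fin n → Fin n) (m : Fin n) (q : ℝ) (hq : 2 ≤ q)
    (κ : ℝ≥0∞) (N : ℕ) (hN : 0 < N)
    (hκ : ∀ k : ℕ, k < N →
      κ ≤ I lam q ((slab n m (k / N) (1 / N)).indicator fun _ => 1)) :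
    ∀ M : ℕ, M ≤ N → ∃ f : (Fin n → ℝ) → ℂ, Measurable f ∧ (∀ ξ, ‖f ξ‖ ≤ 1) ∧
      (∀ ξ, f ξ ≠ 0 → ξ ∈ Set.Icc 0 1 ∧ ξ m < M / N) ∧ M * κ ≤ I lam q f := by
  intro M
  have hN' : (0 : ℝ) < N := by exact_mod_cast hN
  induction M with
  | zero => exact fun _ => ⟨fun _ => 0, measurable_const, by simp, by simp, by simp⟩
  | succ k ih =>
    intro hk
    obtain ⟨f, hf, hb, hs, hI⟩ := ih (by omega)
    set S := slab n m (k / N) (1 / N) with hS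
    have hSsub : S ⊆ Set.Icc 0 1 := by
      refine slab_subset (by positivity) ?_
      rw [← add_div, div_le_one hN']
      exact_mod_cast hk
    set g : (Fin n → ℝ) → ℂ := S.indicator fun _ => 1 with hg
    have hgm : Measurable g := measurable_const.indicator (measurableSet_slab _ _ _ _)
    have hgb : ∀ ξ, ‖g ξ‖ ≤ 1 := by
      intro ξ
      by_cases h : ξ ∈ S <;> simp [hg, h]
    have hcast : ((k + 1 : ℕ) : ℝ) / N = k / N + 1 / N := by push_cast; ring
    have hkk : ((k + 1 : ℕ) : ℝ≥0∞) * κ ≤ I lam q f + I lam q g := by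
      push_cast
      rw [add_mul, one_mul]
      exact add_le_add hI (hκ k (by omega))
    have hfS : ∀ ξ ∈ S, f ξ = 0 := by
      intro ξ hξ
      by_contra h
      have h1 := (hs ξ h).2
      have h2 := (mem_slab hξ).1.1
      linarith
    have hpos : (0 : ℝ) < 1 / N := by positivity
    have hbd : ∀ ε : ℂ, ‖ε‖ = 1 → (∀ ξ, ‖f ξ + ε * g ξ‖ ≤ 1) ∧
        ∀ ξ, f ξ + ε * g ξ ≠ 0 → ξ ∈ Set.Icc 0 1 ∧ ξ m < ((k + 1 : ℕ) : ℝ) / N := by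
      intro ε hε
      constructor
      · intro ξ
        by_cases h : ξ ∈ S
        · simp [hfS ξ h, hg, h, hε]
        · simpa [hg, h] using hb ξ
      · intro ξ hne
        rw [hcast]
        by_cases h : ξ ∈ S
        · exact ⟨hSsub h, (mem_slab h).1.2⟩
        · have : f ξ ≠ 0 := by simpa [hg, h] using hne
          have := hs ξ this
          exact ⟨this.1, by linarith [this.2]⟩
    rcases I_clarkson lam q hq hf hb hgm hgb with h | h
    · obtain ⟨b1, b2⟩ := hbd 1 (by simp)
      simp only [one_mul] at b1 b2
      exact ⟨_, hf.add hgm, b1, b2, hkk.trans h⟩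
    · obtain ⟨b1, b2⟩ := hbd (-1) (by simp)
      simp only [neg_one_mul, ← sub_eq_add_neg] at b1 b2
      exact ⟨_, hf.sub hgm, b1, b2, hkk.trans h⟩

lemma growth (e B : ℝ) (h : ∀ N : ℕ, 0 < N → (N : ℝ) ^ e ≤ B) : e ≤ 0 := by
  by_contra! he
  have ht := (tendsto_rpow_atTop he).comp tendsto_natCast_atTop_atTop
  obtain ⟨N, h1, h2⟩ := ((ht.eventually_gt_atTop B).and (Filter.eventually_gt_atTop 0)).exists
  exact absurd (h N h2) (not_le.2 h1)

end S17

/-- necessary conditions for the restriction estimate for the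
monomial surfaces `Q_j(ξ) = ξ_{λ_j} ξ_j` with `λ_j ≤ j` (0-indexed). -/
theorem statement17 (n : ℕ) (hn : 2 ≤ n)
    (lam : Fin n → Fin n) (hlam : ∀ j, (lam j : ℕ) ≤ (j : ℕ))
    (w : Fin n → ℕ)
    (hw : ∀ j, w j = (Finset.univ.filter (fun i => lam i = j)).card)
    (p q : ℝ≥0∞) (hp : 1 ≤ p) (hq : 1 ≤ q)
    (C : ℝ≥0∞) (hC : C < ⊤)
    (hest : ∀ f : (Fin n → ℝ) → ℂ, Measurable f →
      Function.support f ⊆ Set.Icc 0 1 →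
      eLpNorm (extOp n n (fun ξ j => ξ (lam j) * ξ j) f) q volume ≤
        C * eLpNorm f p volume) :
    ((Finset.univ.sup w : ℕ) : ℝ≥0∞) + 3 ≤ q ∧
      1 / p + (((Finset.univ.sup w : ℕ) : ℝ≥0∞) + 2) / q ≤ 1 := by
  have hn0 : 0 < n := by omega
  by_cases hqt : q = ⊤
  · subst hqt
    refine ⟨le_top, ?_⟩
    rw [ENNReal.div_top, add_zero]
    simpa using ENNReal.inv_le_one.2 hp
  obtain ⟨m, -, hm⟩ := Finset.exists_mem_eq_sup (Finset.univ : Finset (Fin n))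
    ⟨⟨0, hn0⟩, Finset.mem_univ _⟩ w
  rw [hm]
  set W := w m with hW
  have hp0 : p ≠ 0 := (zero_lt_one.trans_le hp).ne'
  have hq0 : q ≠ 0 := (zero_lt_one.trans_le hq).ne'
  set Q := q.toReal with hQ
  have hQpos : 0 < Q := ENNReal.toReal_pos hq0 hqt
  have hqQ : q = ENNReal.ofReal Q := (ENNReal.ofReal_toReal hqt).symm
  set R := 1 / p.toReal with hR
  have hR0 : 0 ≤ R := by positivity
  have hpR : 1 / p = ENNReal.ofReal R := by
    rw [hR, one_div, one_div, ← ENNReal.toReal_inv, ENNReal.ofReal_toReal]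
    exact ENNReal.inv_ne_top.2 hp0
  set D := C.toReal with hD
  have hCD : C = ENNReal.ofReal D := (ENNReal.ofReal_toReal hC.ne).symm
  have hD0 : 0 ≤ D := ENNReal.toReal_nonneg
  have hI : ∀ f : (Fin n → ℝ) → ℂ, Measurable f → Function.support f ⊆ Set.Icc 0 1 →
      S17.I lam Q f ≤ (C * eLpNorm f p volume) ^ Q := by
    intro f hf hs
    have := hest f hf hs
    rw [S17.extOp_eq, eLpNorm_eq_lintegral_rpow_enorm_toReal hq0 hqt] at this
    have h2 := ENNReal.rpow_le_rpow this hQpos.le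
    rw [← ENNReal.rpow_mul, ← hQ, one_div_mul_cancel hQpos.ne', ENNReal.rpow_one] at h2
    exact h2
  have hn' : (0 : ℝ) < n := by exact_mod_cast hn0
  set K : ℝ := (1 / 2) ^ Q * (2 * (1 / (32 * n))) ^ (2 * n) with hK
  have hKpos : 0 < K := by positivity
  -- the lower bound rewritten
  have hlow : ∀ N : ℕ, 0 < N → ∀ k : ℕ, k < N → ENNReal.ofReal (K * (N : ℝ) ^ ((W : ℝ) + 2 - Q))
      ≤ S17.I lam Q ((S17.slab n m (k / N) (1 / N)).indicator fun _ => 1) := by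
    intro N hN k hk
    have hN' : (0 : ℝ) < N := by exact_mod_cast hN
    refine le_trans (le_of_eq ?_) (S17.I_lower hn0 lam m (k / N) (1 / N) (by positivity)
      (by positivity) ?_ Q hQpos)
    · congr 1
      rw [← hw m, ← hW, Real.rpow_sub hN', hK, show (1 / (N : ℝ) / 2) = (1 / 2) * (1 / N) by ring,
        Real.mul_rpow (by norm_num) (by positivity), Real.div_rpow (by norm_num) hN'.le,
        Real.one_rpow]
      have : (N : ℝ) ^ ((W : ℝ) + 2) = (N : ℝ) ^ (W + 2) := by
        rw [← Real.rpow_natCast]; push_cast; rfl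
      rw [this, one_div_pow]
      field_simp
    · rw [← add_div, div_le_one hN']
      exact_mod_cast hk
  have hsecond : R * Q + (W + 2) ≤ Q := by
    have := S17.growth (R * Q + (W + 2) - Q) (D ^ Q / K) ?_
    · linarith
    intro N hN
    have hN' : (0 : ℝ) < N := by exact_mod_cast hN
    have h1 := hlow N hN 0 hN
    have hms := S17.measurableSet_slab n m ((0 : ℕ) / N) (1 / N)
    have hsub : S17.slab n m ((0 : ℕ) / N) (1 / N) ⊆ Set.Icc 0 1 := by
      refine S17.slab_subset (by positivity) ?_
      rw [← add_div, div_le_one hN']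
      exact_mod_cast hN
    have h2 := h1.trans (hI _ (measurable_const.indicator hms)
      (Set.support_indicator_subset.trans hsub))
    rw [eLpNorm_indicator_const' hms ?_ hp0, S17.volume_slab, hCD, enorm_one, one_mul,
      ENNReal.ofReal_rpow_of_pos (by positivity), ← ENNReal.ofReal_mul hD0,
      ENNReal.ofReal_rpow_of_nonneg (by positivity) hQpos.le,
      ENNReal.ofReal_le_ofReal_iff (by positivity), ← hR, Real.mul_rpow hD0 (by positivity),
      ← Real.rpow_mul (by positivity), one_div, Real.inv_rpow hN'.le] at h2
    · rw [le_div_iff₀ hKpos, add_sub_assoc, Real.rpow_add hN']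
      have hpos : (0 : ℝ) < (N : ℝ) ^ (R * Q) := by positivity
      rw [← div_eq_mul_inv, le_div_iff₀ hpos] at h2
      linarith
    · rw [S17.volume_slab]
      have : (0 : ℝ) < 1 / N := by positivity
      exact (ENNReal.ofReal_pos.2 this).ne'
  have hRQ : 0 ≤ R * Q := by positivity
  have hQ2 : 2 ≤ Q := by
    have : (0 : ℝ) ≤ W := by positivity
    linarith
  have hfirst : (W : ℝ) + 3 ≤ Q := by
    have := S17.growth ((W : ℝ) + 3 - Q) (D ^ Q / K) ?_
    · linarith
    intro N hN
    have hN' : (0 : ℝ) < N := by exact_mod_cast hN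
    obtain ⟨f, hf, hb, hs, hIf⟩ := S17.exists_signs lam m Q hQ2 _ N hN (hlow N hN) N le_rfl
    have hsup : Function.support f ⊆ Set.Icc 0 1 := fun ξ hξ => (hs ξ hξ).1
    have h2 := hIf.trans (hI f hf hsup)
    have hone : volume (Set.Icc (0 : Fin n → ℝ) 1) = 1 := by
      rw [Real.volume_Icc_pi]; simp
    have h3 : eLpNorm f p volume ≤ 1 := by
      calc eLpNorm f p volume ≤
          eLpNorm ((Set.Icc (0 : Fin n → ℝ) 1).indicator fun _ => (1 : ℂ)) p volume := by
            refine eLpNorm_mono fun ξ => ?_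
            by_cases h : ξ ∈ Set.Icc (0 : Fin n → ℝ) 1
            · rw [Set.indicator_of_mem h]; simpa using hb ξ
            · have : f ξ = 0 := by
                by_contra h'
                exact h (hsup h')
              simp [this]
        _ = 1 := by
            rw [eLpNorm_indicator_const' measurableSet_Icc (by rw [hone]; simp) hp0, hone]
            simp
    have h4 : (C * eLpNorm f p volume) ^ Q ≤ ENNReal.ofReal (D ^ Q) := by
      rw [← ENNReal.ofReal_rpow_of_nonneg hD0 hQpos.le, ← hCD]
      refine ENNReal.rpow_le_rpow ?_ hQpos.le
      calc C * eLpNorm f p volume ≤ C * 1 := by gcongr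
        _ = C := mul_one _
    have h5 := h2.trans h4
    rw [← ENNReal.ofReal_natCast, ← ENNReal.ofReal_mul hN'.le,
      ENNReal.ofReal_le_ofReal_iff (by positivity)] at h5
    rw [le_div_iff₀ hKpos, show (W : ℝ) + 3 - Q = 1 + ((W : ℝ) + 2 - Q) by ring,
      Real.rpow_add hN', Real.rpow_one]
    linarith
  constructor
  · rw [hqQ]
    have : ((W : ℕ) : ℝ≥0∞) + 3 = ENNReal.ofReal ((W : ℝ) + 3) := by
      rw [ENNReal.ofReal_add (by positivity) (by norm_num)]; simp
    rw [this]
    exact ENNReal.ofReal_le_ofReal hfirst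
  · have : ((W : ℕ) : ℝ≥0∞) + 2 = ENNReal.ofReal ((W : ℝ) + 2) := by
      rw [ENNReal.ofReal_add (by positivity) (by norm_num)]; simp
    rw [hpR, hqQ, this, ← ENNReal.ofReal_div_of_pos hQpos,
      ← ENNReal.ofReal_add hR0 (by positivity), ENNReal.ofReal_le_one]
    rw [← sub_nonneg] at hsecond ⊢
    have : 1 - (R + ((W : ℝ) + 2) / Q) = (Q - (R * Q + (W + 2))) / Q := by
      field_simp
    rw [this]
    positivity
end

section
/- Let n ≥ 2 and define the n-tuple of quadratic forms on ℝ^{n+1} by Q(ξ) = (ξ_1², ξ_1ξ_2, …, ξ_1ξ_{n−1}, ξ_1ξ_n + ξ_{n+1}²). Then for every ε > 0 and every p with 2 ≤ p ≤ n + 3 there exists a constant C = C(ε, p, n) such that for every R ≥ 1, every c ∈ [0, 1 − R^{−1/2}], and every measurable function f : [0,1]^{n+1} → ℂ with supp f ⊂ [0,1]^n × [c, c + R^{−1/2}], one has ‖E^Q f‖_{L^p(B_R^{2n+1})} ≤ C R^{(n² + 4n + 1)/((n+1)p) − (3n+1)/(2(n+1)) + ε} ‖f‖_{L^p([0,1]^{n+1})}.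 -/
open MeasureTheory
open scoped ENNReal

/-- The one-dimensional Gaussian kernel of mass one at scale `1/R`. -/
noncomputable def gk (R u : ℝ) : ℝ≥0∞ := ENNReal.ofReal (R * Real.exp (-(Real.pi * R ^ 2 * u ^ 2)))

lemma gk_measurable (R : ℝ) : Measurable (gk R) := by
  unfold gk; fun_prop

lemma gk_le {R : ℝ} (hR : 0 < R) (u : ℝ) : gk R u ≤ ENNReal.ofReal R := by
  unfold gk
  apply ENNReal.ofReal_le_ofReal
  have : Real.exp (-(Real.pi * R ^ 2 * u ^ 2)) ≤ 1 := by
    apply Real.exp_le_one_iff.mpr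
    have := Real.pi_pos
    have : 0 ≤ Real.pi * R ^ 2 * u ^ 2 := by positivity
    linarith
  nlinarith

lemma gk_int {R : ℝ} (hR : 0 < R) : ∫⁻ u, gk R u = 1 := by
  unfold gk
  have h1 : ∀ u : ℝ, R * Real.exp (-(Real.pi * R ^ 2 * u ^ 2))
      = R * Real.exp (-(Real.pi * R ^ 2) * u ^ 2) := by
    intro u; ring_nf
  simp_rw [h1]
  have hb : 0 < Real.pi * R ^ 2 := by have := Real.pi_pos; positivity
  rw [← ofReal_integral_eq_lintegral_ofReal]
  · rw [integral_const_mul, integral_gaussian]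
    have : Real.pi / (Real.pi * R ^ 2) = (1 / R) ^ 2 := by
      have := Real.pi_pos.ne'
      field_simp
    rw [this, Real.sqrt_sq (by positivity)]
    rw [mul_one_div_cancel hR.ne', ENNReal.ofReal_one]
  · exact (integrable_exp_neg_mul_sq hb).const_mul R
  · filter_upwards with u
    positivity

lemma gk_comp_le {R : ℝ} (hR : 0 < R) {s : Set ℝ} (hs : MeasurableSet s) {φ φ' : ℝ → ℝ}
    (hd : ∀ x ∈ s, HasDerivWithinAt φ (φ' x) s x) (hinj : Set.InjOn φ s) {c : ℝ} (hc : 0 < c)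
    (hφ : ∀ x ∈ s, c ≤ |φ' x|) (a : ℝ) :
    ∫⁻ y in s, gk R (a - φ y) ≤ ENNReal.ofReal (1 / c) := by
  have h1 := lintegral_image_eq_lintegral_abs_deriv_mul hs hd hinj (fun x => gk R (a - x))
  have h2 : ∫⁻ x in φ '' s, gk R (a - x) ≤ 1 := by
    calc _ ≤ ∫⁻ x, gk R (a - x) := setLIntegral_le_lintegral _ _
      _ = ∫⁻ x, gk R x := lintegral_sub_left_eq_self _ _
      _ = 1 := gk_int hR
  have h3 : ENNReal.ofReal c * ∫⁻ y in s, gk R (a - φ y) ≤ 1 := by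
    rw [← lintegral_const_mul' _ _ ENNReal.ofReal_ne_top]
    calc _ ≤ ∫⁻ y in s, ENNReal.ofReal |φ' y| * gk R (a - φ y) := by
          apply setLIntegral_mono' hs
          intro x hx
          gcongr
          exact hφ x hx
      _ ≤ 1 := by rw [← h1]; exact h2
  have hc0 : ENNReal.ofReal c ≠ 0 := by simpa using hc
  rw [one_div, ENNReal.ofReal_inv_of_pos hc]
  rw [ENNReal.le_inv_iff_mul_le, mul_comm]
  exact h3

lemma gk_lin_le {R : ℝ} (hR : 0 < R) (a b : ℝ) {c : ℝ} (hc : 0 < c) (hb : c ≤ |b|) :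
    ∫⁻ y, gk R (a - b * y) ≤ ENNReal.ofReal (1 / c) := by
  have hb0 : b ≠ 0 := by
    intro h; rw [h, abs_zero] at hb; linarith
  have := gk_comp_le hR (s := Set.univ) MeasurableSet.univ (φ := fun y => b * y)
    (φ' := fun _ => b) (fun x _ => by
      have h1 : HasDerivAt (fun y => b * y) b x := by
        simpa using ((hasDerivAt_id x).const_mul b)
      exact h1.hasDerivWithinAt)
    (fun x _ y _ h => mul_left_cancel₀ hb0 h) hc (fun _ _ => hb) a
  simpa using this

/-- middle variables -/
lemma gk_mid {R : ℝ} (hR : 0 < R) (a b s t : ℝ) {c : ℝ} (hc : 0 < c) (hst : c ≤ |s - t|) :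
    ∫⁻ q : ℝ × ℝ, gk R (a - (q.1 + q.2)) * gk R (b - (s * q.1 + t * q.2)) ≤
      ENNReal.ofReal (1 / c) := by
  have hm := gk_measurable R
  rw [Measure.volume_eq_prod, lintegral_prod_symm _ (by fun_prop)]
  calc ∫⁻ y' : ℝ, ∫⁻ y : ℝ, gk R (a - (y + y')) * gk R (b - (s * y + t * y'))
      = ∫⁻ y' : ℝ, ∫⁻ u : ℝ, gk R (a - u) * gk R (b - s * u - (t - s) * y') := by
        congr 1; ext y'
        rw [← lintegral_add_right_eq_self (fun u => gk R (a - u) * gk R (b - s * u - (t - s) * y')) y']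
        congr 1; ext y
        congr 2; ring
    _ = ∫⁻ u : ℝ, ∫⁻ y' : ℝ, gk R (a - u) * gk R (b - s * u - (t - s) * y') := by
        rw [lintegral_lintegral_swap]
        fun_prop
    _ ≤ ∫⁻ u : ℝ, gk R (a - u) * ENNReal.ofReal (1 / c) := by
        apply lintegral_mono
        intro u
        dsimp only
        rw [lintegral_const_mul _ (by fun_prop)]
        gcongr
        exact gk_lin_le hR _ _ hc (by rwa [abs_sub_comm])
    _ = ENNReal.ofReal (1 / c) := by
        rw [lintegral_mul_const _ (by fun_prop), lintegral_sub_left_eq_self, gk_int hR, one_mul]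

/-- last variable -/
lemma gk_last {R : ℝ} (hR : 0 < R) (a : ℝ) (W : Set ℝ) (hW : MeasurableSet W) :
    ∫⁻ q : ℝ × ℝ, W.indicator 1 q.1 * gk R (a - (q.1 + q.2)) ≤ volume W := by
  have hm := gk_measurable R
  have hW1 : Measurable (W.indicator (1 : ℝ → ℝ≥0∞)) := measurable_one.indicator hW
  rw [Measure.volume_eq_prod, lintegral_prod _ (by fun_prop)]
  calc _ ≤ ∫⁻ w, W.indicator 1 w := by
        apply lintegral_mono
        intro w
        dsimp only
        rw [lintegral_const_mul _ (by fun_prop)]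
        have : ∫⁻ y, gk R (a - (w + y)) = 1 := by
          simp_rw [← sub_sub]
          rw [lintegral_sub_left_eq_self, gk_int hR]
        rw [this, mul_one]
    _ = volume W := by rw [lintegral_indicator_one hW]

/-- quadratic variable -/
lemma gk_quad {R : ℝ} (hR : 0 < R) (b u : ℝ) {c : ℝ} (hc : 0 < c) :
    ∫⁻ y in {y : ℝ | c ≤ |u - 2 * y|}, gk R (b - ((u - y) ^ 2 + y ^ 2)) ≤ ENNReal.ofReal (1 / c) := by
  have hd : ∀ (s : Set ℝ) x, HasDerivWithinAt (fun y : ℝ => (u - y) ^ 2 + y ^ 2)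
      (2 * (2 * x - u)) s x := by
    intro s x
    have h1 : HasDerivAt (fun y : ℝ => (u - y) ^ 2 + y ^ 2) (2 * (2 * x - u)) x := by
      have h2 := ((hasDerivAt_id' x).const_sub u).fun_pow 2
      have h3 := (hasDerivAt_id' x).fun_pow 2
      refine (h2.fun_add h3).congr_deriv ?_
      norm_num; ring
    exact h1.hasDerivWithinAt
  have hA : ∫⁻ y in {y : ℝ | c ≤ u - 2 * y}, gk R (b - ((u - y) ^ 2 + y ^ 2))
      ≤ ENNReal.ofReal (1 / (2 * c)) := by
    apply gk_comp_le hR (measurableSet_le (by fun_prop) (by fun_prop)) (fun x _ => hd _ x) _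
      (by positivity)
    · intro x hx
      simp only [Set.mem_ofPred_eq] at hx
      rw [abs_of_nonpos (by linarith)]; linarith
    · intro x hx y hy h
      simp only [Set.mem_ofPred_eq] at hx hy h
      have : (x - y) * (2 * (x + y - u)) = 0 := by linarith
      rcases mul_eq_zero.mp this with h | h <;> linarith
  have hB : ∫⁻ y in {y : ℝ | c ≤ -(u - 2 * y)}, gk R (b - ((u - y) ^ 2 + y ^ 2))
      ≤ ENNReal.ofReal (1 / (2 * c)) := by
    apply gk_comp_le hR (measurableSet_le (by fun_prop) (by fun_prop)) (fun x _ => hd _ x) _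
      (by positivity)
    · intro x hx
      simp only [Set.mem_ofPred_eq] at hx
      rw [abs_of_nonneg (by linarith)]; linarith
    · intro x hx y hy h
      simp only [Set.mem_ofPred_eq] at hx hy h
      have : (x - y) * (2 * (x + y - u)) = 0 := by linarith
      rcases mul_eq_zero.mp this with h | h <;> linarith
  have : {y : ℝ | c ≤ |u - 2 * y|} = {y : ℝ | c ≤ u - 2 * y} ∪ {y : ℝ | c ≤ -(u - 2 * y)} := by
    ext y; simp only [Set.mem_ofPred_eq, Set.mem_union, le_abs]
  rw [this]
  refine (lintegral_union_le _ _ _).trans ((add_le_add hA hB).trans ?_)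
  rw [← ENNReal.ofReal_add (by positivity) (by positivity)]
  apply ENNReal.ofReal_le_ofReal
  apply le_of_eq
  field_simp; norm_num

lemma gk_first {R : ℝ} (hR : 0 < R) (a b : ℝ) {c : ℝ} (hc : 0 < c) :
    ∫⁻ q : ℝ × ℝ, {q : ℝ × ℝ | c ≤ |q.1 - q.2|}.indicator 1 q *
      (gk R (a - (q.1 + q.2)) * gk R (b - (q.1 ^ 2 + q.2 ^ 2))) ≤ ENNReal.ofReal (1 / c) := by
  have hm := gk_measurable R
  have hS : MeasurableSet {q : ℝ × ℝ | c ≤ |q.1 - q.2|} :=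
    measurableSet_le (by fun_prop) (by fun_prop)
  have hS1 : Measurable ({q : ℝ × ℝ | c ≤ |q.1 - q.2|}.indicator (1 : ℝ × ℝ → ℝ≥0∞)) :=
    measurable_one.indicator hS
  rw [Measure.volume_eq_prod, lintegral_prod_symm _ (by fun_prop)]
  have key : ∀ u y : ℝ, {q : ℝ × ℝ | c ≤ |q.1 - q.2|}.indicator (1 : ℝ × ℝ → ℝ≥0∞) (u - y, y) =
      {y : ℝ | c ≤ |u - 2 * y|}.indicator 1 y := by
    intro u y
    have : u - y - y = u - 2 * y := by ring
    simp [Set.indicator_apply, this]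
  calc _ = ∫⁻ y : ℝ, ∫⁻ u : ℝ, {q : ℝ × ℝ | c ≤ |q.1 - q.2|}.indicator 1 (u - y, y) *
          (gk R (a - u) * gk R (b - ((u - y) ^ 2 + y ^ 2))) := by
        congr 1; ext y
        rw [← lintegral_add_right_eq_self (fun u => {q : ℝ × ℝ | c ≤ |q.1 - q.2|}.indicator 1 (u - y, y) *
          (gk R (a - u) * gk R (b - ((u - y) ^ 2 + y ^ 2)))) y]
        congr 1; ext x
        simp
    _ = ∫⁻ u : ℝ, ∫⁻ y : ℝ, {q : ℝ × ℝ | c ≤ |q.1 - q.2|}.indicator 1 (u - y, y) *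
          (gk R (a - u) * gk R (b - ((u - y) ^ 2 + y ^ 2))) := by
        rw [lintegral_lintegral_swap]
        apply Measurable.aemeasurable
        apply Measurable.mul _ (by fun_prop)
        exact hS1.comp (f := fun p : ℝ × ℝ => (p.2 - p.1, p.1)) (by fun_prop)
    _ ≤ ∫⁻ u : ℝ, gk R (a - u) * ENNReal.ofReal (1 / c) := by
        apply lintegral_mono
        intro u
        dsimp only
        have hSu : MeasurableSet {y : ℝ | c ≤ |u - 2 * y|} :=
          measurableSet_le (by fun_prop) (by fun_prop)
        calc _ = ∫⁻ y, gk R (a - u) * {y : ℝ | c ≤ |u - 2 * y|}.indicator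
                (fun y => gk R (b - ((u - y) ^ 2 + y ^ 2))) y := by
              congr 1; ext y
              rw [key]
              by_cases h : y ∈ {y : ℝ | c ≤ |u - 2 * y|} <;> simp [h]
          _ ≤ _ := by
              rw [lintegral_const_mul _ (Measurable.indicator (by fun_prop) hSu),
                lintegral_indicator hSu]
              gcongr
              exact gk_quad hR b u hc
    _ = ENNReal.ofReal (1 / c) := by
        rw [lintegral_mul_const _ (by fun_prop), lintegral_sub_left_eq_self, gk_int hR, one_mul]

lemma lintegral_fin_prod {E : Type} [MeasureSpace E] [SigmaFinite (volume : Measure E)] :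
    ∀ (m : ℕ) (g : Fin m → E → ℝ≥0∞) (_ : ∀ i, Measurable (g i)),
    ∫⁻ q : Fin m → E, ∏ i, g i (q i) = ∏ i, ∫⁻ e, g i e := by
  intro m
  induction m with
  | zero =>
    intro g hg
    simp [volume_pi]
  | succ m ih =>
    intro g hg
    have h := (volume_preserving_piFinSuccAbove (fun _ : Fin (m + 1) => E) 0).symm
    rw [← h.lintegral_comp (by fun_prop)]
    rw [Measure.volume_eq_prod]
    have : ∀ z : E × (Fin m → E), ∏ i, g i ((MeasurableEquiv.piFinSuccAbove (fun _ => E) 0).symm z i)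
      = g 0 z.1 * ∏ i : Fin m, g i.succ (z.2 i) := by
      intro z
      rw [Fin.prod_univ_succ]
      simp [MeasurableEquiv.piFinSuccAbove]
    simp_rw [this]
    rw [lintegral_prod_mul (g := fun y : Fin m → E => ∏ i : Fin m, g i.succ (y i))
      (hg 0).aemeasurable (Finset.measurable_prod _ (fun i _ =>
        (hg i.succ).comp (measurable_pi_apply i))).aemeasurable, ih _ (fun i => hg i.succ),
      Fin.prod_univ_succ]


/-- the phase -/
noncomputable def ee (r : ℝ) : ℂ := Complex.exp (2 * (Real.pi : ℂ) * Complex.I * (r : ℂ))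

lemma ee_norm (r : ℝ) : ‖ee r‖ = 1 := by
  unfold ee
  rw [show 2 * (Real.pi : ℂ) * Complex.I * (r : ℂ) = ((2 * Real.pi * r : ℝ) : ℂ) * Complex.I by
    push_cast; ring]
  exact Complex.norm_exp_ofReal_mul_I _

lemma ee_add (r s : ℝ) : ee (r + s) = ee r * ee s := by
  unfold ee
  rw [← Complex.exp_add]; congr 1; push_cast; ring

lemma ee_conj (r : ℝ) : (starRingEnd ℂ) (ee r) = ee (-r) := by
  unfold ee
  rw [← Complex.exp_conj]; congr 1
  have : (starRingEnd ℂ) (2 : ℂ) = 2 := by exact_mod_cast Complex.conj_ofReal 2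
  simp [this]

lemma ee_cont : Continuous ee := by
  unfold ee; fun_prop

lemma ee_sum {m : ℕ} (g : Fin m → ℝ) : ee (∑ i, g i) = ∏ i, ee (g i) := by
  unfold ee
  rw [← Complex.exp_sum]; congr 1; push_cast; rw [Finset.mul_sum]

lemma ft1 {R : ℝ} (hR : 0 < R) (v : ℝ) :
    ∫ x : ℝ, ee (x * v) * ((Real.exp (-(Real.pi * x ^ 2 / R ^ 2)) : ℝ) : ℂ) =
      ((R * Real.exp (-(Real.pi * R ^ 2 * v ^ 2)) : ℝ) : ℂ) := by
  have hpi := Real.pi_pos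
  have h := fourierIntegral_gaussian (b := ((Real.pi / R ^ 2 : ℝ) : ℂ))
    (by rw [Complex.ofReal_re]; positivity) ((2 * Real.pi * v : ℝ) : ℂ)
  have e1 : ∀ x : ℝ, ee (x * v) * ((Real.exp (-(Real.pi * x ^ 2 / R ^ 2)) : ℝ) : ℂ) =
      Complex.exp (Complex.I * ((2 * Real.pi * v : ℝ) : ℂ) * x) *
        Complex.exp (-((Real.pi / R ^ 2 : ℝ) : ℂ) * (x : ℂ) ^ 2) := by
    intro x
    unfold ee
    push_cast
    congr 2
    · ring
    · ring
  simp_rw [e1]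
  rw [h]
  have e2 : ((Real.pi : ℂ) / ((Real.pi / R ^ 2 : ℝ) : ℂ)) ^ (1 / 2 : ℂ) = (R : ℂ) := by
    rw [← Complex.ofReal_div]
    have : Real.pi / (Real.pi / R ^ 2) = R ^ 2 := by field_simp
    rw [this]
    have h3 : (1 / 2 : ℂ) = ((1 / 2 : ℝ) : ℂ) := by push_cast; ring
    rw [h3, ← Complex.ofReal_cpow (by positivity), ← Real.sqrt_eq_rpow, Real.sqrt_sq hR.le]
  rw [e2]
  push_cast
  congr 2
  have : (R : ℂ) ≠ 0 := by exact_mod_cast hR.ne'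
  have : (Real.pi : ℂ) ≠ 0 := by exact_mod_cast hpi.ne'
  field_simp
  ring

/-- Gaussian weight -/
noncomputable def gw (R : ℝ) {m : ℕ} (x : Fin m → ℝ) : ℝ :=
  ∏ i, Real.exp (-(Real.pi * x i ^ 2 / R ^ 2))

lemma gw_nonneg (R : ℝ) {m : ℕ} (x : Fin m → ℝ) : 0 ≤ gw R x :=
  Finset.prod_nonneg fun _ _ => (Real.exp_pos _).le

lemma gw_integrable {R : ℝ} (hR : 0 < R) {m : ℕ} : Integrable (gw R : (Fin m → ℝ) → ℝ) := by
  unfold gw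
  apply Integrable.fintype_prod (f := fun _ (y : ℝ) => Real.exp (-(Real.pi * y ^ 2 / R ^ 2)))
  intro i
  have := integrable_exp_neg_mul_sq (b := Real.pi / R ^ 2) (by have := Real.pi_pos; positivity)
  convert this using 3
  ring

lemma ftm {R : ℝ} (hR : 0 < R) {m : ℕ} (v : Fin m → ℝ) :
    ∫ x : Fin m → ℝ, ee (∑ i, x i * v i) * ((gw R x : ℝ) : ℂ) =
      ((∏ i, (R * Real.exp (-(Real.pi * R ^ 2 * v i ^ 2))) : ℝ) : ℂ) := by
  unfold gw
  simp_rw [ee_sum, Complex.ofReal_prod, ← Finset.prod_mul_distrib]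
  rw [integral_fintype_prod_volume_eq_prod
    (fun i (y : ℝ) => ee (y * v i) * ((Real.exp (-(Real.pi * y ^ 2 / R ^ 2)) : ℝ) : ℂ))]
  congr 1; ext i
  rw [ft1 hR]

/-- weighted L2 bound -/
lemma schur {X : Type} [MeasurableSpace X] (μ : Measure X) [SigmaFinite μ] {m : ℕ}
    {T : X → Fin m → ℝ} (hT : Measurable T) {G : X → ℂ} (hG : Integrable G μ) {R : ℝ}
    (hR : 0 < R) :
    ∫⁻ x : Fin m → ℝ, ‖∫ u, G u * ee (∑ i, x i * T u i) ∂μ‖ₑ ^ 2 * ENNReal.ofReal (gw R x) ≤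
      ∫⁻ u, ‖G u‖ₑ * ∫⁻ u', ‖G u'‖ₑ * ∏ i, gk R (T u i - T u' i) ∂μ ∂μ := by
  have hTi : ∀ i, Measurable fun u => T u i := fun i => (measurable_pi_apply i).comp hT
  have hee : Measurable ee := ee_cont.measurable
  set H : (Fin m → ℝ) → ℂ := fun x => ∫ u, G u * ee (∑ i, x i * T u i) ∂μ with hH
  -- the three-variable integrand
  let Ψ : (Fin m → ℝ) → X × X → ℂ := fun x z =>
    (G z.1 * (starRingEnd ℂ) (G z.2)) * (ee (∑ i, x i * (T z.1 i - T z.2 i)) * ((gw R x : ℝ) : ℂ))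
  have hGG : Integrable (fun z : X × X => G z.1 * (starRingEnd ℂ) (G z.2)) (μ.prod μ) := by
    have hc : Integrable (fun z => (starRingEnd ℂ) (G z)) μ :=
      Complex.conjLIE.toContinuousLinearEquiv.toContinuousLinearMap.integrable_comp hG
    exact Integrable.mul_prod hG hc
  have hΨ : Integrable (Function.uncurry Ψ) ((volume : Measure (Fin m → ℝ)).prod (μ.prod μ)) := by
    have h0 : Integrable (fun w : (Fin m → ℝ) × (X × X) =>
      ((gw R w.1 : ℝ) : ℂ) * (G w.2.1 * (starRingEnd ℂ) (G w.2.2)))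
        ((volume : Measure (Fin m → ℝ)).prod (μ.prod μ)) :=
      Integrable.mul_prod (gw_integrable hR).ofReal hGG
    have h1 := h0.bdd_mul (c := 1)
      (f := fun w : (Fin m → ℝ) × (X × X) => ee (∑ i, w.1 i * (T w.2.1 i - T w.2.2 i)))
      (Measurable.aestronglyMeasurable (by fun_prop))
      (Filter.Eventually.of_forall fun w => (ee_norm _).le)
    refine h1.congr (Filter.Eventually.of_forall fun w => ?_)
    simp only [Function.uncurry, Ψ]
    ring
  have hpt : ∀ x, ((‖H x‖ ^ 2 * gw R x : ℝ) : ℂ) = ∫ z, Ψ x z ∂(μ.prod μ) := by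
    intro x
    have h1 : ((‖H x‖ ^ 2 : ℝ) : ℂ) = H x * (starRingEnd ℂ) (H x) := by
      rw [Complex.mul_conj, Complex.normSq_eq_norm_sq]
    rw [Complex.ofReal_mul, h1, hH]
    dsimp only
    rw [← integral_conj, ← integral_prod_mul, ← integral_mul_const]
    congr 1; ext z
    simp only [Ψ, map_mul, ee_conj]
    have : ∑ i, x i * (T z.1 i - T z.2 i) = (∑ i, x i * T z.1 i) + (-∑ i, x i * T z.2 i) := by
      simp_rw [mul_sub, Finset.sum_sub_distrib]; ring
    rw [this, ee_add]; ring
  have hintg : Integrable (fun x => ‖H x‖ ^ 2 * gw R x) := by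
    have h1 := hΨ.integral_prod_left
    have h2 : Integrable (fun x => ((‖H x‖ ^ 2 * gw R x : ℝ) : ℂ)) := by
      simp_rw [hpt]; exact h1
    exact h2.re.congr (Filter.Eventually.of_forall fun x => Complex.ofReal_re _)
  have hmain : ((∫ x, ‖H x‖ ^ 2 * gw R x : ℝ) : ℂ) = ∫ z, (G z.1 * (starRingEnd ℂ) (G z.2)) *
      ((∏ i, (R * Real.exp (-(Real.pi * R ^ 2 * (T z.1 i - T z.2 i) ^ 2))) : ℝ) : ℂ)
        ∂(μ.prod μ) := by
    rw [← integral_complex_ofReal]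
    simp_rw [hpt]
    rw [integral_integral_swap hΨ]
    congr 1; ext z
    simp only [Ψ]
    rw [integral_const_mul, ftm hR]
  have hk : ∀ z : X × X, ‖((∏ i, (R * Real.exp (-(Real.pi * R ^ 2 * (T z.1 i - T z.2 i) ^ 2))) : ℝ) : ℂ)‖ₑ
      = ∏ i, gk R (T z.1 i - T z.2 i) := by
    intro z
    have hp : 0 ≤ ∏ i, (R * Real.exp (-(Real.pi * R ^ 2 * (T z.1 i - T z.2 i) ^ 2))) :=
      Finset.prod_nonneg fun i _ => by positivity
    rw [← ofReal_norm, Complex.norm_real, Real.norm_of_nonneg hp,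
      ENNReal.ofReal_prod_of_nonneg (fun i _ => by positivity)]
    rfl
  calc ∫⁻ x, ‖H x‖ₑ ^ 2 * ENNReal.ofReal (gw R x)
      = ∫⁻ x, ENNReal.ofReal (‖H x‖ ^ 2 * gw R x) := by
        congr 1; ext x
        rw [ENNReal.ofReal_mul (by positivity), ENNReal.ofReal_pow (norm_nonneg _),
          ofReal_norm]
    _ = ENNReal.ofReal (∫ x, ‖H x‖ ^ 2 * gw R x) := by
        rw [ofReal_integral_eq_lintegral_ofReal hintg]
        exact Filter.Eventually.of_forall fun x => mul_nonneg (by positivity) (gw_nonneg R x)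
    _ ≤ ‖((∫ x, ‖H x‖ ^ 2 * gw R x : ℝ) : ℂ)‖ₑ := by
        rw [← ofReal_norm, Complex.norm_real]
        exact ENNReal.ofReal_le_ofReal (le_abs_self _)
    _ ≤ ∫⁻ z, ‖(G z.1 * (starRingEnd ℂ) (G z.2)) *
      ((∏ i, (R * Real.exp (-(Real.pi * R ^ 2 * (T z.1 i - T z.2 i) ^ 2))) : ℝ) : ℂ)‖ₑ
        ∂(μ.prod μ) := by
        rw [hmain]; exact enorm_integral_le_lintegral_enorm _
    _ = ∫⁻ z, ‖G z.1‖ₑ * (‖G z.2‖ₑ * ∏ i, gk R (T z.1 i - T z.2 i)) ∂(μ.prod μ) := by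
        congr 1; ext z
        rw [enorm_mul, hk, enorm_mul, mul_assoc]
        congr 2
        rw [← ofReal_norm, ← ofReal_norm, Complex.norm_conj]
    _ = _ := by
        have hm := gk_measurable R
        have hGm := hG.aestronglyMeasurable.enorm
        have h1 : AEMeasurable (fun z : X × X => ‖G z.1‖ₑ) (μ.prod μ) :=
          hGm.comp_quasiMeasurePreserving Measure.quasiMeasurePreserving_fst
        have h2 : AEMeasurable (fun z : X × X => ‖G z.2‖ₑ) (μ.prod μ) :=
          hGm.comp_quasiMeasurePreserving Measure.quasiMeasurePreserving_snd
        have h3 : AEMeasurable (fun z : X × X => ∏ i, gk R (T z.1 i - T z.2 i)) (μ.prod μ) := by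
          fun_prop
        have h4 : AEMeasurable (fun z : X × X => ‖G z.1‖ₑ * (‖G z.2‖ₑ * ∏ i, gk R (T z.1 i - T z.2 i)))
            (μ.prod μ) := h1.mul (h2.mul h3)
        rw [lintegral_prod _ h4]
        congr 1; ext u
        dsimp only
        rw [lintegral_const_mul' _ _ (by simp)]

lemma gw_ball {R : ℝ} (hR : 0 < R) {m : ℕ} {x : Fin m → ℝ} (hx : x ∈ Metric.ball (0 : Fin m → ℝ) R) :
    1 ≤ ENNReal.ofReal (Real.exp (Real.pi * m)) * ENNReal.ofReal (gw R x) := by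
  have hpi := Real.pi_pos
  rw [← ENNReal.ofReal_mul (Real.exp_pos _).le, ← ENNReal.ofReal_one]
  apply ENNReal.ofReal_le_ofReal
  unfold gw
  rw [← Real.exp_sum, ← Real.exp_add]
  apply Real.one_le_exp
  have h1 : ∀ i, -Real.pi ≤ -(Real.pi * x i ^ 2 / R ^ 2) := by
    intro i
    have h2 : ‖x i‖ ≤ R := (norm_le_pi_norm x i).trans (by simpa using (mem_ball_zero_iff.mp hx).le)
    rw [Real.norm_eq_abs] at h2
    have h3 : x i ^ 2 ≤ R ^ 2 := sq_le_sq.mpr (by rwa [abs_of_pos hR])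
    apply neg_le_neg
    rw [div_le_iff₀ (by positivity)]
    exact mul_le_mul_of_nonneg_left h3 hpi.le
  have h4 : ∑ i : Fin m, -Real.pi ≤ ∑ i, -(Real.pi * x i ^ 2 / R ^ 2) :=
    Finset.sum_le_sum fun i _ => h1 i
  simp at h4
  simp
  linarith

lemma schur_ball {X : Type} [MeasurableSpace X] (μ : Measure X) [SigmaFinite μ] {m : ℕ}
    {T : X → Fin m → ℝ} (hT : Measurable T) {G : X → ℂ} (hG : Integrable G μ) {R : ℝ}
    (hR : 0 < R) {A : ℝ≥0∞}
    (hA : ∀ u, ∫⁻ u', ‖G u'‖ₑ * ∏ i, gk R (T u i - T u' i) ∂μ ≤ A) :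
    ∫⁻ x in Metric.ball (0 : Fin m → ℝ) R, ‖∫ u, G u * ee (∑ i, x i * T u i) ∂μ‖ₑ ^ 2 ≤
      ENNReal.ofReal (Real.exp (Real.pi * m)) * (A * ∫⁻ u, ‖G u‖ₑ ∂μ) := by
  calc _ ≤ ∫⁻ x in Metric.ball (0 : Fin m → ℝ) R, ENNReal.ofReal (Real.exp (Real.pi * m)) *
          (‖∫ u, G u * ee (∑ i, x i * T u i) ∂μ‖ₑ ^ 2 * ENNReal.ofReal (gw R x)) := by
        apply setLIntegral_mono' measurableSet_ball
        intro x hx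
        rw [mul_left_comm]
        exact le_mul_of_one_le_right (by simp) (gw_ball hR hx)
    _ ≤ ∫⁻ x, ENNReal.ofReal (Real.exp (Real.pi * m)) *
          (‖∫ u, G u * ee (∑ i, x i * T u i) ∂μ‖ₑ ^ 2 * ENNReal.ofReal (gw R x)) :=
        setLIntegral_le_lintegral _ _
    _ ≤ _ := by
        rw [lintegral_const_mul' _ _ ENNReal.ofReal_ne_top]
        gcongr
        refine (schur μ hT hG hR).trans ?_
        calc _ ≤ ∫⁻ u, ‖G u‖ₑ * A ∂μ := by
              apply lintegral_mono; intro u; dsimp only; gcongr; exact hA u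
          _ = A * ∫⁻ u, ‖G u‖ₑ ∂μ := by
              rw [lintegral_mul_const'' _ hG.aestronglyMeasurable.enorm, mul_comm]


lemma idx_lt (n : ℕ) (j : Fin n) : (j : ℕ) < n + 1 := j.isLt.trans (Nat.lt_succ_self n)

/-- the quadratic forms of the theorem -/
noncomputable def qf (n : ℕ) (ξ : Fin (n + 1) → ℝ) (j : Fin n) : ℝ :=
  ξ ⟨0, Nat.succ_pos n⟩ * ξ ⟨(j : ℕ), idx_lt n j⟩ +
    (if (j : ℕ) = n - 1 then ξ ⟨n, Nat.lt_succ_self n⟩ ^ 2 else 0)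

/-- parametrization of the surface -/
noncomputable def Ph (n : ℕ) (ξ : Fin (n + 1) → ℝ) : Fin (n + 1 + n) → ℝ :=
  Fin.append ξ (qf n ξ)

/-- extension operator as an integral over the whole space -/
noncomputable def EE (n : ℕ) (f : (Fin (n + 1) → ℝ) → ℂ) (x : Fin (n + 1 + n) → ℝ) : ℂ :=
  ∫ ξ, f ξ * ee (∑ i, x i * Ph n ξ i)

lemma qf_measurable (n : ℕ) : Measurable (qf n) := by
  apply measurable_pi_lambda
  intro j
  unfold qf
  split_ifs <;> fun_prop

lemma Ph_measurable (n : ℕ) : Measurable (Ph n) := by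
  apply measurable_pi_lambda
  intro i
  unfold Ph
  refine Fin.addCases (fun i => ?_) (fun j => ?_) i
  · simp only [Fin.append_left]; fun_prop
  · simp only [Fin.append_right]
    exact (measurable_pi_apply j).comp (qf_measurable n)

lemma extOp_eq (n : ℕ) (f : (Fin (n + 1) → ℝ) → ℂ) (hf : Function.support f ⊆ Set.Icc 0 1) :
    extOp (n + 1) n (fun ξ j =>
            ξ ⟨0, Nat.succ_pos n⟩ * ξ ⟨(j : ℕ), idx_lt n j⟩ +
              (if (j : ℕ) = n - 1 then ξ ⟨n, Nat.lt_succ_self n⟩ ^ 2 else 0)) f = EE n f := by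
  ext x
  unfold extOp EE
  rw [setIntegral_eq_integral_of_forall_compl_eq_zero]
  · congr 1; ext ξ
    rw [mul_comm]
    congr 1
    have h : ∑ i, x i * Ph n ξ i = (∑ i : Fin (n + 1), x (Fin.castAdd n i) * ξ i) +
        ∑ j : Fin n, x (Fin.natAdd (n + 1) j) * qf n ξ j := by
      rw [Fin.sum_univ_add (b := n)]
      unfold Ph
      simp only [Fin.append_left, Fin.append_right]
    rw [h]
    rfl
  · intro ξ hξ
    have : f ξ = 0 := by
      by_contra h
      exact hξ (hf h)
    rw [this, mul_zero]

/-- admissible functions: bounded by one, supported in the cube -/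
structure Adm (n : ℕ) (f : (Fin (n + 1) → ℝ) → ℂ) : Prop where
  meas : Measurable f
  bdd : ∀ ξ, ‖f ξ‖ ≤ 1
  supp : Function.support f ⊆ Set.Icc 0 1

lemma Adm.enorm_le {n : ℕ} {f : (Fin (n + 1) → ℝ) → ℂ} (hf : Adm n f) (ξ) : ‖f ξ‖ₑ ≤ 1 := by
  rw [← ofReal_norm, ← ENNReal.ofReal_one]
  exact ENNReal.ofReal_le_ofReal (hf.bdd ξ)

lemma Adm.integrable {n : ℕ} {f : (Fin (n + 1) → ℝ) → ℂ} (hf : Adm n f) : Integrable f := by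
  have h1 : IntegrableOn f (Set.Icc 0 1) := by
    apply Measure.integrableOn_of_bounded (M := 1)
    · exact isCompact_Icc.measure_lt_top.ne
    · exact hf.meas.aestronglyMeasurable
    · exact Filter.Eventually.of_forall hf.bdd
  exact (integrableOn_iff_integrable_of_support_subset hf.supp).mp h1

lemma EE_measurable (n : ℕ) {f : (Fin (n + 1) → ℝ) → ℂ} (hf : Measurable f) :
    Measurable (EE n f) := by
  have hP : ∀ i, Measurable fun u => Ph n u i :=
    fun i => (measurable_pi_apply i).comp (Ph_measurable n)
  have hee : Measurable ee := ee_cont.measurable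
  have h : StronglyMeasurable (fun z : (Fin (n + 1 + n) → ℝ) × (Fin (n + 1) → ℝ) =>
      f z.2 * ee (∑ i, z.1 i * Ph n z.2 i)) := by
    apply Measurable.stronglyMeasurable
    fun_prop
  exact h.integral_prod_right.measurable

lemma EE_enorm_le (n : ℕ) (f : (Fin (n + 1) → ℝ) → ℂ) (x) : ‖EE n f x‖ₑ ≤ ∫⁻ ξ, ‖f ξ‖ₑ := by
  refine (enorm_integral_le_lintegral_enorm _).trans (le_of_eq ?_)
  congr 1; ext ξ
  rw [enorm_mul, ← ofReal_norm (ee _), ee_norm]; simp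

/-- L2 endpoint -/
lemma L2_est (n : ℕ) {f : (Fin (n + 1) → ℝ) → ℂ} (hf : Adm n f) {R : ℝ} (hR : 0 < R) :
    ∫⁻ x in Metric.ball (0 : Fin (n + 1 + n) → ℝ) R, ‖EE n f x‖ₑ ^ 2 ≤
      ENNReal.ofReal (Real.exp (Real.pi * ((n + 1 + n : ℕ) : ℝ))) *
        (ENNReal.ofReal R ^ n * ∫⁻ ξ, ‖f ξ‖ₑ) := by
  apply schur_ball volume (Ph_measurable n) hf.integrable hR
  intro u
  calc _ ≤ ∫⁻ u' : Fin (n + 1) → ℝ, (∏ i, gk R (u i - u' i)) * ENNReal.ofReal R ^ n := by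
        apply lintegral_mono
        intro u'
        dsimp only
        rw [Fin.prod_univ_add]
        unfold Ph
        simp only [Fin.append_left, Fin.append_right]
        refine (mul_le_of_le_one_left (by simp) (hf.enorm_le u')).trans ?_
        gcongr
        calc _ ≤ ∏ _j : Fin n, ENNReal.ofReal R := Finset.prod_le_prod' fun j _ => gk_le hR _
          _ = _ := by simp
    _ = ENNReal.ofReal R ^ n := by
        have hm := gk_measurable R
        rw [lintegral_mul_const' _ _ (by simp)]
        rw [lintegral_fin_prod (n + 1) (fun i y => gk R (u i - y)) (fun i => by fun_prop)]
        simp [lintegral_sub_left_eq_self, gk_int hR]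

lemma lintegral_split {E : Type} [MeasureSpace E] [SigmaFinite (volume : Measure E)] (m : ℕ)
    (F : E → E → (Fin m → E) → ℝ≥0∞)
    (hF : Measurable fun z : E × E × (Fin m → E) => F z.1 z.2.1 z.2.2) :
    ∫⁻ q : Fin (m + 2) → E, F (q 0) (q (Fin.last (m + 1))) (fun i => q i.castSucc.succ) =
      ∫⁻ e0, ∫⁻ el, ∫⁻ q, F e0 el q := by
  have h := (volume_preserving_piFinSuccAbove (fun _ : Fin (m + 2) => E) 0).symm
  have h' := (volume_preserving_piFinSuccAbove (fun _ : Fin (m + 1) => E) (Fin.last m)).symm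
  have hm1 : Measurable fun q : Fin (m + 2) → E =>
      F (q 0) (q (Fin.last (m + 1))) (fun i => q i.castSucc.succ) :=
    hF.comp (g := fun z : E × E × (Fin m → E) => F z.1 z.2.1 z.2.2)
      (f := fun q : Fin (m + 2) → E => (q 0, q (Fin.last (m + 1)), fun i => q i.castSucc.succ))
      (by fun_prop)
  have hm2 : Measurable fun z : E × (Fin (m + 1) → E) =>
      F z.1 (z.2 (Fin.last m)) (fun i => z.2 i.castSucc) :=
    hF.comp (g := fun z : E × E × (Fin m → E) => F z.1 z.2.1 z.2.2)
      (f := fun z : E × (Fin (m + 1) → E) => (z.1, z.2 (Fin.last m), fun i => z.2 i.castSucc))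
      (by fun_prop)
  rw [← h.lintegral_comp hm1, Measure.volume_eq_prod]
  have e1 : ∀ z : E × (Fin (m + 1) → E), F ((MeasurableEquiv.piFinSuccAbove (fun _ => E) 0).symm z 0)
      ((MeasurableEquiv.piFinSuccAbove (fun _ => E) 0).symm z (Fin.last (m + 1)))
      (fun i => (MeasurableEquiv.piFinSuccAbove (fun _ => E) 0).symm z i.castSucc.succ) =
      F z.1 (z.2 (Fin.last m)) (fun i => z.2 i.castSucc) := by
    intro z
    simp [MeasurableEquiv.piFinSuccAbove, ← Fin.succ_last]
  simp_rw [e1]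
  rw [lintegral_prod _ hm2.aemeasurable]
  congr 1; ext e0
  have hm3 : Measurable fun z : Fin (m + 1) → E => F e0 (z (Fin.last m)) (fun i => z i.castSucc) :=
    hm2.comp (g := fun z : E × (Fin (m + 1) → E) =>
      F z.1 (z.2 (Fin.last m)) (fun i => z.2 i.castSucc)) (f := fun z => (e0, z)) (by fun_prop)
  dsimp only
  rw [← h'.lintegral_comp hm3, Measure.volume_eq_prod]
  have e2 : ∀ z : E × (Fin m → E), F e0
      ((MeasurableEquiv.piFinSuccAbove (fun _ => E) (Fin.last m)).symm z (Fin.last m))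
      (fun i => (MeasurableEquiv.piFinSuccAbove (fun _ => E) (Fin.last m)).symm z i.castSucc) =
      F e0 z.1 z.2 := by
    intro z
    simp [MeasurableEquiv.piFinSuccAbove]
  simp_rw [e2]
  have hm4 : Measurable fun z : E × (Fin m → E) => F e0 z.1 z.2 :=
    hF.comp (g := fun z : E × E × (Fin m → E) => F z.1 z.2.1 z.2.2)
      (f := fun z : E × (Fin m → E) => (e0, z)) (by fun_prop)
  rw [lintegral_prod _ hm4.aemeasurable]

/-- Schur integral for pairs of separated points -/
lemma pair_int (m : ℕ) {R : ℝ} (hR : 0 < R) (W : Set ℝ) (hW : MeasurableSet W) {c : ℝ} (hc : 0 < c)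
    (v0 w0 vl : ℝ) (v w : Fin m → ℝ) (θ : Fin m → ℝ) :
    ∫⁻ q : Fin (m + 2) → ℝ × ℝ,
      ({q : ℝ × ℝ | c ≤ |q.1 - q.2|}.indicator 1 (q 0) *
        (gk R (v0 - ((q 0).1 + (q 0).2)) * gk R (w0 - ((q 0).1 ^ 2 + (q 0).2 ^ 2)))) *
      ((W.indicator 1 (q (Fin.last (m + 1))).1 *
        gk R (vl - ((q (Fin.last (m + 1))).1 + (q (Fin.last (m + 1))).2))) *
      ∏ i : Fin m, (gk R (v i - ((q i.castSucc.succ).1 + (q i.castSucc.succ).2)) *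
        gk R (w i - θ i * ((q (Fin.last (m + 1))).1 ^ 2 + (q (Fin.last (m + 1))).2 ^ 2)
          - ((q 0).1 * (q i.castSucc.succ).1 + (q 0).2 * (q i.castSucc.succ).2)))) ≤
      volume W * ENNReal.ofReal (1 / c) ^ (m + 1) := by
  have hm := gk_measurable R
  have hS : MeasurableSet {q : ℝ × ℝ | c ≤ |q.1 - q.2|} :=
    measurableSet_le (by fun_prop) (by fun_prop)
  have hS1 : Measurable ({q : ℝ × ℝ | c ≤ |q.1 - q.2|}.indicator (1 : ℝ × ℝ → ℝ≥0∞)) :=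
    measurable_one.indicator hS
  have hW1 : Measurable (W.indicator (1 : ℝ → ℝ≥0∞)) := measurable_one.indicator hW
  let F : ℝ × ℝ → ℝ × ℝ → (Fin m → ℝ × ℝ) → ℝ≥0∞ := fun e0 el q =>
      ({q : ℝ × ℝ | c ≤ |q.1 - q.2|}.indicator 1 e0 *
        (gk R (v0 - (e0.1 + e0.2)) * gk R (w0 - (e0.1 ^ 2 + e0.2 ^ 2)))) *
      ((W.indicator 1 el.1 * gk R (vl - (el.1 + el.2))) *
      ∏ i : Fin m, (gk R (v i - ((q i).1 + (q i).2)) *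
        gk R (w i - θ i * (el.1 ^ 2 + el.2 ^ 2) - (e0.1 * (q i).1 + e0.2 * (q i).2))))
  have hF : Measurable fun z : (ℝ × ℝ) × (ℝ × ℝ) × (Fin m → ℝ × ℝ) => F z.1 z.2.1 z.2.2 := by
    fun_prop
  refine (lintegral_split m F hF).trans_le ?_
  calc ∫⁻ e0, ∫⁻ el, ∫⁻ q, F e0 el q
      ≤ ∫⁻ e0 : ℝ × ℝ, ∫⁻ el : ℝ × ℝ, ({q : ℝ × ℝ | c ≤ |q.1 - q.2|}.indicator 1 e0 *
        (gk R (v0 - (e0.1 + e0.2)) * gk R (w0 - (e0.1 ^ 2 + e0.2 ^ 2)))) *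
      ((W.indicator 1 el.1 * gk R (vl - (el.1 + el.2))) * ENNReal.ofReal (1 / c) ^ m) := by
        apply lintegral_mono; intro e0
        apply lintegral_mono; intro el
        dsimp only [F]
        rw [lintegral_const_mul _ (by fun_prop), lintegral_const_mul _ (by fun_prop)]
        by_cases he : c ≤ |e0.1 - e0.2|
        · gcongr
          rw [lintegral_fin_prod m (fun i (y : ℝ × ℝ) => gk R (v i - (y.1 + y.2)) *
            gk R (w i - θ i * (el.1 ^ 2 + el.2 ^ 2) - (e0.1 * y.1 + e0.2 * y.2)))
            (fun i => by fun_prop)]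
          calc _ ≤ ∏ _i : Fin m, ENNReal.ofReal (1 / c) :=
                Finset.prod_le_prod' fun i _ => gk_mid hR _ _ _ _ hc he
            _ = _ := by simp
        · simp [he]
    _ ≤ ∫⁻ e0 : ℝ × ℝ, ({q : ℝ × ℝ | c ≤ |q.1 - q.2|}.indicator 1 e0 *
        (gk R (v0 - (e0.1 + e0.2)) * gk R (w0 - (e0.1 ^ 2 + e0.2 ^ 2)))) *
      (volume W * ENNReal.ofReal (1 / c) ^ m) := by
        apply lintegral_mono; intro e0
        dsimp only
        rw [lintegral_const_mul _ (by fun_prop), lintegral_mul_const _ (by fun_prop)]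
        gcongr
        exact gk_last hR _ W hW
    _ ≤ ENNReal.ofReal (1 / c) * (volume W * ENNReal.ofReal (1 / c) ^ m) := by
        rw [lintegral_mul_const _ (by fun_prop)]
        gcongr
        exact gk_first hR _ _ hc
    _ = _ := by rw [pow_succ]; ring


/-- bilinear L2 estimate -/
lemma bilin (n : ℕ) (hn : 2 ≤ n) {f g : (Fin (n + 1) → ℝ) → ℂ} (hf : Adm n f) (hg : Adm n g)
    {R : ℝ} (hR : 0 < R) (W : Set ℝ) (hW : MeasurableSet W) {c : ℝ} (hc : 0 < c)
    (hfW : ∀ ξ, f ξ ≠ 0 → ξ (Fin.last n) ∈ W)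
    (hsep : ∀ ξ η, f ξ ≠ 0 → g η ≠ 0 → c ≤ |ξ 0 - η 0|) :
    ∫⁻ x in Metric.ball (0 : Fin (n + 1 + n) → ℝ) R, ‖EE n f x * EE n g x‖ₑ ^ 2 ≤
      ENNReal.ofReal (Real.exp (Real.pi * ((n + 1 + n : ℕ) : ℝ))) *
        ((volume W * ENNReal.ofReal (1 / c) ^ n) * ((∫⁻ ξ, ‖f ξ‖ₑ) * ∫⁻ ξ, ‖g ξ‖ₑ)) := by
  have hPi : ∀ i, Measurable fun u => Ph n u i :=
    fun i => (measurable_pi_apply i).comp (Ph_measurable n)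
  have hk := gk_measurable R
  have hfm := hf.meas
  have hgm := hg.meas
  -- product structure
  have hprod : ∀ x, EE n f x * EE n g x = ∫ z : (Fin (n + 1) → ℝ) × (Fin (n + 1) → ℝ),
      (f z.1 * g z.2) * ee (∑ i, x i * (Ph n z.1 i + Ph n z.2 i)) ∂(volume.prod volume) := by
    intro x
    unfold EE
    rw [← integral_prod_mul]
    congr 1; ext z
    simp_rw [mul_add, Finset.sum_add_distrib, ee_add]
    ring
  have hN : ∫⁻ z : (Fin (n + 1) → ℝ) × (Fin (n + 1) → ℝ), ‖f z.1 * g z.2‖ₑ ∂(volume.prod volume) =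
      (∫⁻ ξ, ‖f ξ‖ₑ) * ∫⁻ ξ, ‖g ξ‖ₑ := by
    simp_rw [enorm_mul]
    exact lintegral_prod_mul hf.meas.enorm.aemeasurable hg.meas.enorm.aemeasurable
  simp_rw [hprod]
  rw [← hN]
  have hT : Measurable (fun z : (Fin (n + 1) → ℝ) × (Fin (n + 1) → ℝ) =>
      fun i => Ph n z.1 i + Ph n z.2 i) := by
    apply measurable_pi_lambda; intro i; fun_prop
  refine schur_ball (volume.prod volume) hT (hf.integrable.mul_prod hg.integrable) hR ?_
  intro u
  set V : Fin (n + 1 + n) → ℝ := fun i => Ph n u.1 i + Ph n u.2 i with hV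
  obtain ⟨m, rfl⟩ : ∃ m, n = m + 1 := ⟨n - 1, by omega⟩
  have hm : 1 ≤ m := by omega
  have hmp := volume_measurePreserving_arrowProdEquivProdArrow ℝ ℝ (Fin (m + 1 + 1))
  have hmeas : Measurable fun z : (Fin (m + 1 + 1) → ℝ) × (Fin (m + 1 + 1) → ℝ) =>
      ‖f z.1 * g z.2‖ₑ * ∏ i, gk R (V i - (Ph (m + 1) z.1 i + Ph (m + 1) z.2 i)) := by
    fun_prop
  have e0 := hmp.lintegral_comp hmeas
  rw [← Measure.volume_eq_prod, ← e0]
  refine le_trans (lintegral_mono ?_) (pair_int m hR W hW hc (V (Fin.castAdd _ 0))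
    (V (Fin.natAdd _ 0)) (V (Fin.castAdd _ (Fin.last (m + 1))))
    (fun i => V (Fin.castAdd _ i.castSucc.succ)) (fun i => V (Fin.natAdd _ i.succ))
    (fun i => if (i : ℕ) + 1 = m then 1 else 0))
  intro q
  dsimp only
  set ξ : Fin (m + 1 + 1) → ℝ := fun i => (q i).1 with hξ
  set η : Fin (m + 1 + 1) → ℝ := fun i => (q i).2 with hη
  have hq : (MeasurableEquiv.arrowProdEquivProdArrow ℝ ℝ (Fin (m + 1 + 1))) q = (ξ, η) := rfl
  rw [hq]
  dsimp only
  have hind : ‖f ξ * g η‖ₑ ≤ {q : ℝ × ℝ | c ≤ |q.1 - q.2|}.indicator 1 (q 0) *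
      W.indicator 1 (q (Fin.last (m + 1))).1 := by
    by_cases h1 : f ξ = 0
    · simp [h1]
    by_cases h2 : g η = 0
    · simp [h2]
    have h3 : q 0 ∈ {q : ℝ × ℝ | c ≤ |q.1 - q.2|} := hsep ξ η h1 h2
    have h4 : (q (Fin.last (m + 1))).1 ∈ W := hfW ξ h1
    rw [Set.indicator_of_mem h3, Set.indicator_of_mem h4, enorm_mul]
    simpa using mul_le_mul' (hf.enorm_le ξ) (hg.enorm_le η)
  have hpr : ∏ i, gk R (V i - (Ph (m + 1) ξ i + Ph (m + 1) η i)) =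
      (gk R (V (Fin.castAdd _ 0) - ((q 0).1 + (q 0).2)) *
        gk R (V (Fin.natAdd _ 0) - ((q 0).1 ^ 2 + (q 0).2 ^ 2))) *
      (gk R (V (Fin.castAdd _ (Fin.last (m + 1))) -
        ((q (Fin.last (m + 1))).1 + (q (Fin.last (m + 1))).2)) *
      ∏ i : Fin m, (gk R (V (Fin.castAdd _ i.castSucc.succ) -
          ((q i.castSucc.succ).1 + (q i.castSucc.succ).2)) *
        gk R (V (Fin.natAdd _ i.succ) - (if (i : ℕ) + 1 = m then 1 else 0) *
            ((q (Fin.last (m + 1))).1 ^ 2 + (q (Fin.last (m + 1))).2 ^ 2)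
          - ((q 0).1 * (q i.castSucc.succ).1 + (q 0).2 * (q i.castSucc.succ).2)))) := by
    rw [Fin.prod_univ_add (b := m + 1)]
    unfold Ph
    simp only [Fin.append_left, Fin.append_right]
    rw [Fin.prod_univ_succ (n := m + 1), Fin.prod_univ_castSucc (n := m),
      Fin.prod_univ_succ (n := m), Finset.prod_mul_distrib]
    have a0 : qf (m + 1) ξ 0 + qf (m + 1) η 0 = (q 0).1 ^ 2 + (q 0).2 ^ 2 := by
      unfold qf
      have : ¬ ((0 : Fin (m + 1)) : ℕ) = m + 1 - 1 := by simp; omega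
      rw [if_neg this, if_neg this]
      simp only [hξ, hη]
      simp only [Fin.coe_ofNat_eq_mod, Nat.zero_mod, Fin.mk_zero]
      ring
    have a1 : ∀ i : Fin m, V (Fin.natAdd _ i.succ) - (qf (m + 1) ξ i.succ + qf (m + 1) η i.succ) =
        V (Fin.natAdd _ i.succ) - (if (i : ℕ) + 1 = m then 1 else 0) *
            ((q (Fin.last (m + 1))).1 ^ 2 + (q (Fin.last (m + 1))).2 ^ 2)
          - ((q 0).1 * (q i.castSucc.succ).1 + (q 0).2 * (q i.castSucc.succ).2) := by
      intro i
      have b1 : ∀ ζ : Fin (m + 1 + 1) → ℝ, qf (m + 1) ζ i.succ = ζ 0 * ζ i.castSucc.succ +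
          (if (i : ℕ) + 1 = m then ζ (Fin.last (m + 1)) ^ 2 else 0) := fun ζ => rfl
      rw [b1, b1]
      split_ifs <;> ring
    rw [a0]
    simp_rw [a1]
    simp only [hξ, hη, Fin.succ_last]
    ring
  rw [hpr]
  calc _ ≤ ({q : ℝ × ℝ | c ≤ |q.1 - q.2|}.indicator 1 (q 0) *
      W.indicator 1 (q (Fin.last (m + 1))).1) * _ := mul_le_mul_left hind _
    _ = _ := by ring


lemma broad_narrow_real (K : ℕ) (hK : 1 ≤ K) (k : ℕ) (a : ℕ → ℝ) (B : ℝ) (ha : ∀ i, 0 ≤ a i)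
    (haB : ∀ i, a i ≤ B) :
    (∑ i ∈ Finset.range K, a i) ^ (k + 4) ≤ 4 ^ (k + 4) * ∑ i ∈ Finset.range K, a i ^ (k + 4) +
      (K : ℝ) ^ (k + 6) * B ^ k * ∑ i ∈ Finset.range K, ∑ j ∈ Finset.range K,
        if (i + 2 ≤ j ∨ j + 2 ≤ i) then (a i * a j) ^ 2 else 0 := by
  have hB : 0 ≤ B := (ha 0).trans (haB 0)
  have hK0 : (0 : ℝ) < K := by exact_mod_cast hK
  obtain ⟨i0, hi0, hmax⟩ := Finset.exists_max_image (Finset.range K) a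
    ⟨0, Finset.mem_range.mpr hK⟩
  have hnn : ∀ i j, 0 ≤ (if (i + 2 ≤ j ∨ j + 2 ≤ i) then (a i * a j) ^ 2 else 0) := by
    intro i j; split_ifs <;> positivity
  have hsum0 : 0 ≤ ∑ i ∈ Finset.range K, a i := Finset.sum_nonneg fun i _ => ha i
  have hT1 : a i0 ^ (k + 4) ≤ ∑ i ∈ Finset.range K, a i ^ (k + 4) :=
    Finset.single_le_sum (f := fun i => a i ^ (k + 4)) (fun i _ => pow_nonneg (ha i) _) hi0
  have hT1' : 0 ≤ ∑ i ∈ Finset.range K, a i ^ (k + 4) :=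
    Finset.sum_nonneg fun i _ => pow_nonneg (ha i) _
  have hT2' : 0 ≤ ∑ i ∈ Finset.range K, ∑ j ∈ Finset.range K,
        (if (i + 2 ≤ j ∨ j + 2 ≤ i) then (a i * a j) ^ 2 else 0) :=
    Finset.sum_nonneg fun i _ => Finset.sum_nonneg fun j _ => hnn i j
  by_cases h : ∃ j ∈ Finset.range K, (i0 + 2 ≤ j ∨ j + 2 ≤ i0) ∧ a i0 ≤ K * a j
  · obtain ⟨j, hj, hfar, hle⟩ := h
    have hT2 : (a i0 * a j) ^ 2 ≤ ∑ i ∈ Finset.range K, ∑ j ∈ Finset.range K,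
        (if (i + 2 ≤ j ∨ j + 2 ≤ i) then (a i * a j) ^ 2 else 0) := by
      calc (a i0 * a j) ^ 2 = (if (i0 + 2 ≤ j ∨ j + 2 ≤ i0) then (a i0 * a j) ^ 2 else 0) := by
            rw [if_pos hfar]
        _ ≤ ∑ j ∈ Finset.range K, (if (i0 + 2 ≤ j ∨ j + 2 ≤ i0) then (a i0 * a j) ^ 2 else 0) :=
            Finset.single_le_sum (f := fun j => if (i0 + 2 ≤ j ∨ j + 2 ≤ i0) then (a i0 * a j) ^ 2 else 0)
              (fun j _ => hnn i0 j) hj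
        _ ≤ _ := Finset.single_le_sum (f := fun i => ∑ j ∈ Finset.range K,
            (if (i + 2 ≤ j ∨ j + 2 ≤ i) then (a i * a j) ^ 2 else 0))
              (fun i _ => Finset.sum_nonneg fun j _ => hnn i j) hi0
    have hS : ∑ i ∈ Finset.range K, a i ≤ K * a i0 := by
      calc _ ≤ ∑ _i ∈ Finset.range K, a i0 := Finset.sum_le_sum hmax
        _ = _ := by simp
    calc _ ≤ (K * a i0) ^ (k + 4) := pow_le_pow_left₀ hsum0 hS _
      _ = (K : ℝ) ^ (k + 4) * (a i0 ^ k * (a i0 ^ 2 * a i0 ^ 2)) := by ring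
      _ ≤ (K : ℝ) ^ (k + 4) * (B ^ k * (a i0 ^ 2 * (K * a j) ^ 2)) := by
          have h1 := ha i0
          have h2 := haB i0
          gcongr
      _ = (K : ℝ) ^ (k + 6) * B ^ k * (a i0 * a j) ^ 2 := by ring
      _ ≤ (K : ℝ) ^ (k + 6) * B ^ k * ∑ i ∈ Finset.range K, ∑ j ∈ Finset.range K,
        (if (i + 2 ≤ j ∨ j + 2 ≤ i) then (a i * a j) ^ 2 else 0) := by gcongr
      _ ≤ _ := by
          have : 0 ≤ 4 ^ (k + 4) * ∑ i ∈ Finset.range K, a i ^ (k + 4) := by positivity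
          linarith
  · push Not at h
    have hp : ∀ j ∈ Finset.range K, a j ≤ a i0 / K +
        (if j ∈ Finset.Icc (i0 - 1) (i0 + 1) then a i0 else 0) := by
      intro j hj
      have h1 := ha i0
      split_ifs with hnear
      · have := hmax j hj
        have : 0 ≤ a i0 / K := by positivity
        linarith
      · have hfar : i0 + 2 ≤ j ∨ j + 2 ≤ i0 := by
          simp only [Finset.mem_Icc] at hnear
          omega
        have := h j hj hfar
        rw [add_zero, le_div_iff₀ hK0]
        linarith
    have hS : ∑ i ∈ Finset.range K, a i ≤ 4 * a i0 := by
      calc _ ≤ ∑ j ∈ Finset.range K, (a i0 / K +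
          (if j ∈ Finset.Icc (i0 - 1) (i0 + 1) then a i0 else 0)) := Finset.sum_le_sum hp
        _ = a i0 + ((Finset.range K ∩ Finset.Icc (i0 - 1) (i0 + 1)).card : ℝ) * a i0 := by
            rw [Finset.sum_add_distrib, Finset.sum_ite_mem]
            simp
            field_simp
        _ ≤ a i0 + 3 * a i0 := by
            have h1 := ha i0
            have h2 : (Finset.range K ∩ Finset.Icc (i0 - 1) (i0 + 1)).card ≤ 3 := by
              refine (Finset.card_le_card Finset.inter_subset_right).trans ?_
              simp; omega
            have h3 : ((Finset.range K ∩ Finset.Icc (i0 - 1) (i0 + 1)).card : ℝ) ≤ 3 := by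
              exact_mod_cast h2
            gcongr
        _ = 4 * a i0 := by ring
    calc _ ≤ (4 * a i0) ^ (k + 4) := pow_le_pow_left₀ hsum0 hS _
      _ = 4 ^ (k + 4) * a i0 ^ (k + 4) := by ring
      _ ≤ 4 ^ (k + 4) * ∑ i ∈ Finset.range K, a i ^ (k + 4) := by gcongr
      _ ≤ _ := by
          have : 0 ≤ (K : ℝ) ^ (k + 6) * B ^ k * ∑ i ∈ Finset.range K, ∑ j ∈ Finset.range K,
            (if (i + 2 ≤ j ∨ j + 2 ≤ i) then (a i * a j) ^ 2 else 0) := by positivity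
          linarith

/-- complex-valued version with extended norms -/
lemma broad_narrow (K : ℕ) (hK : 1 ≤ K) (k : ℕ) (F : ℕ → ℂ) (B : ℝ)
    (hB : 0 ≤ B) (hFB : ∀ i, ‖F i‖ₑ ≤ ENNReal.ofReal B) :
    ‖∑ i ∈ Finset.range K, F i‖ₑ ^ (k + 4) ≤
      4 ^ (k + 4) * ∑ i ∈ Finset.range K, ‖F i‖ₑ ^ (k + 4) +
      ENNReal.ofReal ((K : ℝ) ^ (k + 6) * B ^ k) * ∑ i ∈ Finset.range K, ∑ j ∈ Finset.range K,
        if (i + 2 ≤ j ∨ j + 2 ≤ i) then ‖F i * F j‖ₑ ^ 2 else 0 := by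
  have h := broad_narrow_real K hK k (fun i => ‖F i‖) B (fun i => norm_nonneg _) (fun i => by
    have := hFB i
    rw [← ofReal_norm] at this
    exact (ENNReal.ofReal_le_ofReal_iff hB).mp this)
  have h1 : ‖∑ i ∈ Finset.range K, F i‖ ^ (k + 4) ≤ (∑ i ∈ Finset.range K, ‖F i‖) ^ (k + 4) :=
    pow_le_pow_left₀ (norm_nonneg _) (norm_sum_le _ _) _
  have h2 := ENNReal.ofReal_le_ofReal (h1.trans h)
  have hnn : ∀ i j, 0 ≤ (if (i + 2 ≤ j ∨ j + 2 ≤ i) then (‖F i‖ * ‖F j‖) ^ 2 else 0) := by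
    intro i j; split_ifs <;> positivity
  rw [ENNReal.ofReal_pow (norm_nonneg _), ofReal_norm, ENNReal.ofReal_add
      (mul_nonneg (by positivity) (Finset.sum_nonneg fun i _ => by positivity))
      (mul_nonneg (by positivity) (Finset.sum_nonneg fun i _ => Finset.sum_nonneg fun j _ => hnn i j)),
    ENNReal.ofReal_mul (by positivity), ENNReal.ofReal_mul (by positivity),
    ENNReal.ofReal_sum_of_nonneg (fun i _ => by positivity),
    ENNReal.ofReal_sum_of_nonneg (fun i _ => Finset.sum_nonneg fun j _ => hnn i j)] at h2
  refine h2.trans (le_of_eq ?_)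
  congr 1
  · congr 1
    · rw [ENNReal.ofReal_pow (by norm_num)]; norm_num
    · refine Finset.sum_congr rfl fun i _ => ?_
      rw [ENNReal.ofReal_pow (norm_nonneg _), ofReal_norm]
  · congr 1
    refine Finset.sum_congr rfl fun i _ => ?_
    rw [ENNReal.ofReal_sum_of_nonneg (fun j _ => hnn i j)]
    refine Finset.sum_congr rfl fun j _ => ?_
    split_ifs
    · rw [ENNReal.ofReal_pow (by positivity), ← norm_mul, ofReal_norm]
    · simp

/-- functions adapted to a slab -/
structure Slab (n : ℕ) (w ρ a δ : ℝ) (f : (Fin (n + 1) → ℝ) → ℂ) : Prop extends Adm n f where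
  last_mem : ∀ ξ, f ξ ≠ 0 → ξ (Fin.last n) ∈ Set.Icc w (w + ρ)
  zero_mem : ∀ ξ, f ξ ≠ 0 → ξ 0 ∈ Set.Ico a (a + δ)

lemma Slab.mass {n : ℕ} (hn : 2 ≤ n) {w ρ a δ : ℝ} (hρ : 0 ≤ ρ) (hδ : 0 ≤ δ)
    {f : (Fin (n + 1) → ℝ) → ℂ}
    (hf : Slab n w ρ a δ f) : ∫⁻ ξ, ‖f ξ‖ₑ ≤ ENNReal.ofReal (δ * ρ) := by
  obtain ⟨m, rfl⟩ : ∃ m, n = m + 1 := ⟨n - 1, by omega⟩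
  let s : Fin (m + 1 + 1) → Set ℝ := Fin.cons (Set.Ico a (a + δ))
    (Fin.snoc (fun _ : Fin m => Set.Icc (0 : ℝ) 1) (Set.Icc w (w + ρ)))
  have hs : MeasurableSet (Set.univ.pi s) := by
    apply MeasurableSet.univ_pi
    intro i
    refine Fin.cases ?_ (fun i => ?_) i
    · exact measurableSet_Ico
    · refine Fin.lastCases ?_ (fun i => ?_) i
      · simp [s]
      · simp [s]
  calc ∫⁻ ξ, ‖f ξ‖ₑ ≤ ∫⁻ ξ, (Set.univ.pi s).indicator 1 ξ := by
        apply lintegral_mono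
        intro ξ
        by_cases h : f ξ = 0
        · simp [h]
        · have hmem : ξ ∈ Set.univ.pi s := by
            intro i _
            refine Fin.cases ?_ (fun i => ?_) i
            · exact hf.zero_mem ξ h
            · refine Fin.lastCases ?_ (fun i => ?_) i
              · have := hf.last_mem ξ h
                simpa [s] using this
              · have := hf.supp h
                simp only [s, Fin.cons_succ, Fin.snoc_castSucc]
                exact ⟨this.1 _, this.2 _⟩
          rw [Set.indicator_of_mem hmem]
          exact hf.enorm_le ξ
    _ = volume (Set.univ.pi s) := lintegral_indicator_one hs
    _ = ENNReal.ofReal (δ * ρ) := by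
        rw [volume_pi_pi, Fin.prod_univ_succ, Fin.prod_univ_castSucc]
        simp [s]
        rw [ENNReal.ofReal_mul hδ]

/-- the inductive statement -/
def PP (n : ℕ) (R w ρ δ A : ℝ) : Prop :=
  ∀ (a : ℝ) (f : (Fin (n + 1) → ℝ) → ℂ), Slab n w ρ a δ f →
    ∫⁻ x in Metric.ball (0 : Fin (n + 1 + n) → ℝ) R, ‖EE n f x‖ₑ ^ (n + 3) ≤
      ENNReal.ofReal (A * ρ ^ (n + 1)) * ∫⁻ ξ, ‖f ξ‖ₑ

lemma PP_base (n : ℕ) (hn : 2 ≤ n) {R w ρ δ : ℝ} (hR : 1 ≤ R) (hρ : 0 ≤ ρ) (hρ1 : ρ ≤ 1)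
    (hδ : 0 ≤ δ) (hδR : δ ≤ 2 / R ^ 2) : PP n R w ρ δ (2 ^ (2 * n + 1) * 2 ^ (n + 2)) := by
  intro a f hf
  have hM := hf.mass hn hρ hδ
  have hR0 : 0 < R := by linarith
  calc _ ≤ ∫⁻ x in Metric.ball (0 : Fin (n + 1 + n) → ℝ) R,
        ENNReal.ofReal (δ * ρ) ^ (n + 2) * ∫⁻ ξ, ‖f ξ‖ₑ := by
        apply lintegral_mono
        intro x
        dsimp only
        rw [pow_succ]
        gcongr
        · exact (EE_enorm_le n f x).trans hM
        · exact EE_enorm_le n f x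
    _ = ENNReal.ofReal (δ * ρ) ^ (n + 2) * ENNReal.ofReal ((2 * R) ^ (n + 1 + n)) *
        ∫⁻ ξ, ‖f ξ‖ₑ := by
        rw [setLIntegral_const, Real.volume_pi_ball _ hR0]
        simp
        ring
    _ ≤ _ := by
        rw [← ENNReal.ofReal_pow (by positivity), ← ENNReal.ofReal_mul (by positivity)]
        refine mul_le_mul_left (ENNReal.ofReal_le_ofReal ?_) _
        calc (δ * ρ) ^ (n + 2) * (2 * R) ^ (n + 1 + n)
            ≤ ((2 / R ^ 2) * ρ) ^ (n + 2) * (2 * R) ^ (n + 1 + n) := by gcongr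
          _ = 2 ^ (2 * n + 1) * 2 ^ (n + 2) * (ρ ^ (n + 2) * (R ^ (n + 1 + n) / R ^ (2 * (n + 2)))) := by
              rw [mul_pow, mul_pow, div_pow, ← pow_mul]
              ring
          _ ≤ 2 ^ (2 * n + 1) * 2 ^ (n + 2) * (ρ ^ (n + 1) * 1) := by
              gcongr 2 ^ (2 * n + 1) * 2 ^ (n + 2) * (?_ * ?_)
              · exact pow_le_pow_of_le_one hρ hρ1 (by omega)
              · rw [div_le_one (by positivity)]
                exact pow_le_pow_right₀ hR (by omega)
          _ = _ := by ring

/-- constant produced at each step -/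
noncomputable def CK (n K : ℕ) : ℝ := (K : ℝ) ^ (n + 6) * Real.exp (Real.pi * ((n + 1 + n : ℕ) : ℝ))

lemma PP_step (n : ℕ) (hn : 2 ≤ n) {R w ρ δ A : ℝ} (hR : 1 ≤ R) (hρ : 0 ≤ ρ)
    (K : ℕ) (hK : 1 ≤ K) (hδ : 0 < δ) (hA : 0 ≤ A) (h : PP n R w ρ (δ / K) A) :
    PP n R w ρ δ (4 ^ (n + 3) * A + CK n K) := by
  intro a f hf
  have hR0 : 0 < R := by linarith
  have hK0 : (0 : ℝ) < K := by exact_mod_cast hK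
  set δ' := δ / K with hδ'
  have hδ'0 : 0 < δ' := by positivity
  have hKδ : K * δ' = δ := by rw [hδ']; field_simp
  -- the pieces
  let S : ℕ → Set (Fin (n + 1) → ℝ) := fun i => {ξ | ⌊(ξ 0 - a) / δ'⌋ = (i : ℤ)}
  have hS : ∀ i, MeasurableSet (S i) := by
    intro i
    have : Measurable fun ξ : Fin (n + 1) → ℝ => ⌊(ξ 0 - a) / δ'⌋ :=
      Int.measurable_floor.comp (by fun_prop)
    exact this (measurableSet_singleton _)
  let g : ℕ → (Fin (n + 1) → ℝ) → ℂ := fun i => (S i).indicator f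
  have hgne : ∀ i ξ, g i ξ ≠ 0 → ξ ∈ S i ∧ f ξ ≠ 0 := by
    intro i ξ hne
    have := Set.mem_of_indicator_ne_zero hne
    refine ⟨this, ?_⟩
    simpa [g, this] using hne
  have hSmem : ∀ i ξ, ξ ∈ S i → a + i * δ' ≤ ξ 0 ∧ ξ 0 < a + i * δ' + δ' := by
    intro i ξ hξ
    have h1 := Int.floor_eq_iff.mp hξ
    obtain ⟨h1, h2⟩ := h1
    rw [le_div_iff₀ hδ'0] at h1
    rw [div_lt_iff₀ hδ'0] at h2
    push_cast at h1 h2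
    constructor <;> linarith
  have hgS : ∀ i : ℕ, Slab n w ρ (a + i * δ') δ' (g i) := by
    intro i
    refine ⟨⟨hf.meas.indicator (hS i), ?_, ?_⟩, ?_, ?_⟩
    · intro ξ
      by_cases hξ : ξ ∈ S i
      · simpa [g, hξ] using hf.bdd ξ
      · simp [g, hξ]
    · intro ξ hξ
      exact hf.supp (hgne i ξ hξ).2
    · intro ξ hξ
      exact hf.last_mem ξ (hgne i ξ hξ).2
    · intro ξ hξ
      exact hSmem i ξ (hgne i ξ hξ).1
  -- decomposition
  have hdec : ∀ ξ, ∃ i0 : ℕ, ∀ i ∈ Finset.range K, (i ≠ i0 → g i ξ = 0) ∧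
      (i0 ∈ Finset.range K ∨ f ξ = 0) ∧ g i0 ξ = f ξ := by
    intro ξ
    by_cases hfξ : f ξ = 0
    · refine ⟨0, fun i _ => ⟨fun _ => ?_, Or.inr hfξ, ?_⟩⟩ <;> simp [g, hfξ, Set.indicator_apply]
    · obtain ⟨h1, h2⟩ := hf.zero_mem ξ hfξ
      have h3 : 0 ≤ ⌊(ξ 0 - a) / δ'⌋ := Int.floor_nonneg.mpr (div_nonneg (by linarith) hδ'0.le)
      have h4 : ⌊(ξ 0 - a) / δ'⌋ < K := by
        rw [Int.floor_lt, div_lt_iff₀ hδ'0]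
        push_cast
        linarith
      refine ⟨⌊(ξ 0 - a) / δ'⌋.toNat, fun i _ => ⟨fun hne => ?_, Or.inl ?_, ?_⟩⟩
      · apply Set.indicator_of_notMem
        intro hmem
        have : ⌊(ξ 0 - a) / δ'⌋ = (i : ℤ) := hmem
        omega
      · rw [Finset.mem_range]; omega
      · apply Set.indicator_of_mem
        change ⌊(ξ 0 - a) / δ'⌋ = _
        omega
  have hsum : ∀ ξ, f ξ = ∑ i ∈ Finset.range K, g i ξ := by
    intro ξ
    obtain ⟨i0, hi0⟩ := hdec ξ
    have h0 := hi0 0 (Finset.mem_range.mpr hK)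
    rw [Finset.sum_eq_single i0 (fun i hi hne => (hi0 i hi).1 hne), h0.2.2]
    intro hnot
    rw [h0.2.2]
    exact h0.2.1.resolve_left hnot
  have hsumN : ∀ ξ, ‖f ξ‖ₑ = ∑ i ∈ Finset.range K, ‖g i ξ‖ₑ := by
    intro ξ
    obtain ⟨i0, hi0⟩ := hdec ξ
    have h0 := hi0 0 (Finset.mem_range.mpr hK)
    rw [Finset.sum_eq_single i0 (fun i hi hne => by rw [(hi0 i hi).1 hne, enorm_zero]), h0.2.2]
    intro hnot
    rw [h0.2.2, h0.2.1.resolve_left hnot, enorm_zero]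
  have hN : ∫⁻ ξ, ‖f ξ‖ₑ = ∑ i ∈ Finset.range K, ∫⁻ ξ, ‖g i ξ‖ₑ := by
    rw [← lintegral_finsetSum _ (fun i _ => (hgS i).meas.enorm)]
    congr 1; ext ξ; exact hsumN ξ
  have hE : ∀ x, EE n f x = ∑ i ∈ Finset.range K, EE n (g i) x := by
    intro x
    unfold EE
    have hPi : ∀ i, Measurable fun u => Ph n u i :=
      fun i => (measurable_pi_apply i).comp (Ph_measurable n)
    have hee : Measurable ee := ee_cont.measurable
    rw [← integral_finsetSum]
    · congr 1; ext ξ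
      rw [hsum ξ, Finset.sum_mul]
    · intro i _
      exact (hgS i).integrable.mul_bdd (c := 1) (Measurable.aestronglyMeasurable (by fun_prop))
        (Filter.Eventually.of_forall fun ξ => (ee_norm _).le)
  have hmass : ∀ i, ∫⁻ ξ, ‖g i ξ‖ₑ ≤ ENNReal.ofReal (δ' * ρ) :=
    fun i => (hgS i).mass hn hρ hδ'0.le
  obtain ⟨k, hk⟩ : ∃ k, n = k + 1 := ⟨n - 1, by omega⟩
  have hpk : n + 3 = k + 4 := by omega
  have hB0 : 0 ≤ δ' * ρ := by positivity
  have hbn : ∀ x, ‖EE n f x‖ₑ ^ (n + 3) ≤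
      4 ^ (n + 3) * ∑ i ∈ Finset.range K, ‖EE n (g i) x‖ₑ ^ (n + 3) +
      ENNReal.ofReal ((K : ℝ) ^ (k + 6) * (δ' * ρ) ^ k) * ∑ i ∈ Finset.range K,
        ∑ j ∈ Finset.range K,
        if (i + 2 ≤ j ∨ j + 2 ≤ i) then ‖EE n (g i) x * EE n (g j) x‖ₑ ^ 2 else 0 := by
    intro x
    rw [hE x, hpk]
    exact broad_narrow K hK k (fun i => EE n (g i) x) (δ' * ρ) hB0
      (fun i => (EE_enorm_le n (g i) x).trans (hmass i))
  have hEm : ∀ i, Measurable (EE n (g i)) := fun i => EE_measurable n (hgS i).meas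
  set Cm := ENNReal.ofReal (Real.exp (Real.pi * ((n + 1 + n : ℕ) : ℝ))) with hCm
  have hbil : ∀ i j, ∫⁻ x in Metric.ball (0 : Fin (n + 1 + n) → ℝ) R,
      (if (i + 2 ≤ j ∨ j + 2 ≤ i) then ‖EE n (g i) x * EE n (g j) x‖ₑ ^ 2 else 0) ≤
      Cm * ((ENNReal.ofReal ρ * ENNReal.ofReal (1 / δ') ^ n) *
        ((∫⁻ ξ, ‖g i ξ‖ₑ) * ENNReal.ofReal (δ' * ρ))) := by
    intro i j
    by_cases hij : (i + 2 ≤ j ∨ j + 2 ≤ i)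
    · simp only [if_pos hij]
      have := bilin n hn (hgS i).toAdm (hgS j).toAdm hR0 (Set.Icc w (w + ρ)) measurableSet_Icc hδ'0
        (hgS i).last_mem (by
          intro ξ η hξ hη
          obtain ⟨a1, a2⟩ := (hgS i).zero_mem ξ hξ
          obtain ⟨b1, b2⟩ := (hgS j).zero_mem η hη
          rw [le_abs]
          rcases hij with hij | hij
          · right
            have : ((i : ℝ) + 2) ≤ j := by exact_mod_cast hij
            nlinarith
          · left
            have : ((j : ℝ) + 2) ≤ i := by exact_mod_cast hij
            nlinarith)
      refine this.trans ?_
      rw [Real.volume_Icc, add_sub_cancel_left]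
      gcongr
      exact hmass j
    · simp only [if_neg hij]
      simp
  calc _ ≤ ∫⁻ x in Metric.ball (0 : Fin (n + 1 + n) → ℝ) R,
      (4 ^ (n + 3) * ∑ i ∈ Finset.range K, ‖EE n (g i) x‖ₑ ^ (n + 3) +
      ENNReal.ofReal ((K : ℝ) ^ (k + 6) * (δ' * ρ) ^ k) * ∑ i ∈ Finset.range K,
        ∑ j ∈ Finset.range K,
        if (i + 2 ≤ j ∨ j + 2 ≤ i) then ‖EE n (g i) x * EE n (g j) x‖ₑ ^ 2 else 0) :=
        lintegral_mono hbn
    _ = 4 ^ (n + 3) * (∑ i ∈ Finset.range K, ∫⁻ x in Metric.ball (0 : Fin (n + 1 + n) → ℝ) R,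
          ‖EE n (g i) x‖ₑ ^ (n + 3)) +
      ENNReal.ofReal ((K : ℝ) ^ (k + 6) * (δ' * ρ) ^ k) * ∑ i ∈ Finset.range K,
        ∑ j ∈ Finset.range K, ∫⁻ x in Metric.ball (0 : Fin (n + 1 + n) → ℝ) R,
        if (i + 2 ≤ j ∨ j + 2 ≤ i) then ‖EE n (g i) x * EE n (g j) x‖ₑ ^ 2 else 0 := by
        have hm1 : ∀ i, Measurable fun x => ‖EE n (g i) x‖ₑ ^ (n + 3) :=
          fun i => (hEm i).enorm.pow_const _
        have hm2 : ∀ i j, Measurable fun x =>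
            (if (i + 2 ≤ j ∨ j + 2 ≤ i) then ‖EE n (g i) x * EE n (g j) x‖ₑ ^ 2 else 0) := by
          intro i j
          split_ifs
          · exact ((hEm i).mul (hEm j)).enorm.pow_const _
          · exact measurable_const
        have hm3 : ∀ i, Measurable fun x => ∑ j ∈ Finset.range K,
            (if (i + 2 ≤ j ∨ j + 2 ≤ i) then ‖EE n (g i) x * EE n (g j) x‖ₑ ^ 2 else 0) :=
          fun i => Finset.measurable_fun_sum _ fun j _ => hm2 i j
        rw [lintegral_add_left ((Finset.measurable_fun_sum _ fun i _ => hm1 i).const_mul _),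
          lintegral_const_mul _ (Finset.measurable_fun_sum _ fun i _ => hm1 i),
          lintegral_const_mul _ (Finset.measurable_fun_sum _ fun i _ => hm3 i),
          lintegral_finsetSum _ (fun i _ => hm1 i), lintegral_finsetSum _ (fun i _ => hm3 i)]
        congr 2
        refine Finset.sum_congr rfl fun i _ => ?_
        rw [lintegral_finsetSum _ (fun j _ => hm2 i j)]
    _ ≤ 4 ^ (n + 3) * (∑ i ∈ Finset.range K, ENNReal.ofReal (A * ρ ^ (n + 1)) * ∫⁻ ξ, ‖g i ξ‖ₑ) +
      ENNReal.ofReal ((K : ℝ) ^ (k + 6) * (δ' * ρ) ^ k) * ∑ i ∈ Finset.range K,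
        ∑ j ∈ Finset.range K, Cm * ((ENNReal.ofReal ρ * ENNReal.ofReal (1 / δ') ^ n) *
        ((∫⁻ ξ, ‖g i ξ‖ₑ) * ENNReal.ofReal (δ' * ρ))) := by
        gcongr with i hi i hi j hj
        · exact h _ _ (hgS i)
        · exact hbil i j
    _ = 4 ^ (n + 3) * (ENNReal.ofReal (A * ρ ^ (n + 1)) * ∫⁻ ξ, ‖f ξ‖ₑ) +
      ENNReal.ofReal ((K : ℝ) ^ (k + 6) * (δ' * ρ) ^ k) * ((K : ℝ≥0∞) *
        (Cm * ((ENNReal.ofReal ρ * ENNReal.ofReal (1 / δ') ^ n) * ENNReal.ofReal (δ' * ρ))) *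
          ∫⁻ ξ, ‖f ξ‖ₑ) := by
        rw [hN]
        simp only [Finset.sum_const, Finset.card_range, nsmul_eq_mul, Finset.mul_sum]
        congr 1
        refine Finset.sum_congr rfl fun i _ => ?_
        ring
    _ = ENNReal.ofReal (4 ^ (n + 3) * (A * ρ ^ (n + 1))) * (∫⁻ ξ, ‖f ξ‖ₑ) +
        ENNReal.ofReal (CK n K * ρ ^ (n + 1)) * (∫⁻ ξ, ‖f ξ‖ₑ) := by
        congr 1
        · rw [ENNReal.ofReal_mul (p := 4 ^ (n + 3)) (by positivity), ENNReal.ofReal_pow (by norm_num),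
            mul_assoc]
          norm_num
        · rw [← mul_assoc, hCm, ← ENNReal.ofReal_natCast K, ← ENNReal.ofReal_pow (by positivity),
            ← ENNReal.ofReal_mul hρ, ← ENNReal.ofReal_mul (by positivity),
            ← ENNReal.ofReal_mul (by positivity), ← ENNReal.ofReal_mul (by positivity),
            ← ENNReal.ofReal_mul (by positivity)]
          congr 2
          unfold CK
          rw [hk, one_div, inv_pow, mul_pow]
          field_simp
          ring
    _ = _ := by
        rw [← add_mul, ← ENNReal.ofReal_add (by positivity) (by unfold CK; positivity)]
        congr 2
        ring


lemma PP_mono {n : ℕ} {R w ρ δ A A' : ℝ} (hρ : 0 ≤ ρ) (hA : A ≤ A') (h : PP n R w ρ δ A) :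
    PP n R w ρ δ A' := by
  intro a f hf
  refine (h a f hf).trans (mul_le_mul_left (ENNReal.ofReal_le_ofReal ?_) _)
  gcongr

lemma PP_iter (n : ℕ) (hn : 2 ≤ n) {R w ρ : ℝ} (hR : 1 ≤ R) (hρ : 0 ≤ ρ) (hρ1 : ρ ≤ 1)
    (K : ℕ) (hK : 1 ≤ K) (m : ℕ) : ∀ δ : ℝ, 0 < δ → δ ≤ 2 / R ^ 2 * (K : ℝ) ^ m →
    PP n R w ρ δ ((4 ^ (n + 3) + 1) ^ m * (2 ^ (2 * n + 1) * 2 ^ (n + 2) + CK n K)) := by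
  have hCK : 0 ≤ CK n K := by unfold CK; positivity
  have hK0 : (0 : ℝ) < K := by exact_mod_cast hK
  induction m with
  | zero =>
    intro δ hδ hle
    refine PP_mono hρ ?_ (PP_base n hn hR hρ hρ1 hδ.le (by simpa using hle))
    simp [hCK]
  | succ m ih =>
    intro δ hδ hle
    have h1 := ih (δ / K) (by positivity) (by
      rw [div_le_iff₀ hK0]
      rw [pow_succ (K : ℝ)] at hle
      linarith)
    refine PP_mono hρ ?_ (PP_step n hn hR hρ K hK hδ (by positivity) h1)
    have h2 : CK n K ≤ (4 ^ (n + 3) + 1) ^ m * (2 ^ (2 * n + 1) * 2 ^ (n + 2) + CK n K) := by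
      have h3 : (1 : ℝ) ≤ (4 ^ (n + 3) + 1) ^ m := one_le_pow₀ (by
        have : (0 : ℝ) ≤ 4 ^ (n + 3) := by positivity
        linarith)
      have h4 : (0 : ℝ) ≤ 2 ^ (2 * n + 1) * 2 ^ (n + 2) := by positivity
      nlinarith
    rw [pow_succ _ m]
    linarith

lemma PP_top (n : ℕ) (hn : 2 ≤ n) (ε : ℝ) (hε : 0 < ε) : ∃ C : ℝ, 0 ≤ C ∧
    ∀ R w ρ : ℝ, 1 ≤ R → 0 ≤ ρ → ρ ≤ 1 → PP n R w ρ 2 (C * R ^ ε) := by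
  set B : ℝ := 4 ^ (n + 3) + 1 with hB
  have hB1 : 1 ≤ B := by
    have : (0 : ℝ) ≤ 4 ^ (n + 3) := by positivity
    linarith
  have hB0 : 0 < B := by linarith
  have hlB : 0 ≤ Real.log B := Real.log_nonneg hB1
  obtain ⟨K, hK⟩ := exists_nat_ge (max 2 (Real.exp (2 * Real.log B / ε)))
  have hK2 : (2 : ℝ) ≤ K := (le_max_left _ _).trans hK
  have hKe : Real.exp (2 * Real.log B / ε) ≤ K := (le_max_right _ _).trans hK
  have hK0 : (0 : ℝ) < K := by linarith
  have hKN : 1 ≤ K := by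
    have : (1 : ℝ) ≤ K := by linarith
    exact_mod_cast this
  have hlK : 0 < Real.log K := Real.log_pos (by linarith)
  have hlK2 : 2 * Real.log B ≤ Real.log K * ε := by
    have := (Real.le_log_iff_exp_le hK0).mpr hKe
    rwa [div_le_iff₀ hε] at this
  have hCK : 0 ≤ CK n K := by unfold CK; positivity
  refine ⟨B * (2 ^ (2 * n + 1) * 2 ^ (n + 2) + CK n K), by positivity, ?_⟩
  intro R w ρ hR hρ hρ1
  have hR0 : 0 < R := by linarith
  have hlR : 0 ≤ Real.log R := Real.log_nonneg hR
  set M := ⌈2 * Real.log R / Real.log K⌉₊ with hM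
  have hM1 : 2 * Real.log R / Real.log K ≤ M := Nat.le_ceil _
  have hM2 : (M : ℝ) < 2 * Real.log R / Real.log K + 1 := Nat.ceil_lt_add_one (by positivity)
  have hKM : R ^ 2 ≤ (K : ℝ) ^ M := by
    rw [div_le_iff₀ hlK] at hM1
    rw [← Real.log_le_log_iff (by positivity) (by positivity), Real.log_pow, Real.log_pow]
    exact_mod_cast hM1
  have hBM : B ^ M ≤ B * R ^ ε := by
    rw [← Real.log_le_log_iff (by positivity) (by positivity), Real.log_pow,
      Real.log_mul hB0.ne' (by positivity), Real.log_rpow hR0]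
    have h1 : 2 * Real.log R / Real.log K * Real.log B ≤ ε * Real.log R := by
      rw [div_mul_eq_mul_div, div_le_iff₀ hlK]
      nlinarith
    nlinarith
  refine PP_mono hρ ?_ (PP_iter n hn hR hρ hρ1 K hKN M 2 (by norm_num) ?_)
  · calc _ ≤ B * R ^ ε * (2 ^ (2 * n + 1) * 2 ^ (n + 2) + CK n K) := by gcongr
      _ = _ := by ring
  · rw [div_mul_eq_mul_div, le_div_iff₀ (by positivity)]
    linarith

/-- interpolated estimate for bounded functions -/
lemma interp (n : ℕ) (hn : 2 ≤ n) (ε : ℝ) (hε : 0 < ε) (p : ℝ) (hp2 : 2 ≤ p)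
    (hpn : p ≤ (n : ℝ) + 3) : ∃ C : ℝ, 0 ≤ C ∧ ∀ R w : ℝ, 1 ≤ R →
    ∀ f, Adm n f → (∀ ξ, f ξ ≠ 0 → ξ (Fin.last n) ∈ Set.Icc w (w + R ^ (-(1/2) : ℝ))) →
    ∫⁻ x in Metric.ball (0 : Fin (n + 1 + n) → ℝ) R, ‖EE n f x‖ₑ ^ p ≤
      ENNReal.ofReal (C * R ^ (((n : ℝ) ^ 2 + 4 * n + 1) / ((n : ℝ) + 1) -
              p * (3 * (n : ℝ) + 1) / (2 * ((n : ℝ) + 1)) + ε)) * ∫⁻ ξ, ‖f ξ‖ₑ := by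
  obtain ⟨C0, hC0, hP⟩ := PP_top n hn ε hε
  set D : ℝ := Real.exp (Real.pi * ((n + 1 + n : ℕ) : ℝ)) with hD
  have hD0 : 0 < D := Real.exp_pos _
  have hn1 : (0 : ℝ) < n + 1 := by positivity
  set θ : ℝ := (p - 2) / (n + 1) with hθ
  have hθ0 : 0 ≤ θ := div_nonneg (by linarith) hn1.le
  have hθ1 : θ ≤ 1 := by rw [hθ, div_le_one hn1]; linarith
  have hpθ : p = 2 * (1 - θ) + (n + 3) * θ := by rw [hθ]; field_simp; ring
  refine ⟨D ^ (1 - θ) * C0 ^ θ, by positivity, ?_⟩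
  intro R w hR f hf hlast
  have hR0 : 0 < R := by linarith
  set ρ := R ^ (-(1/2) : ℝ) with hρ
  have hρ0 : 0 < ρ := by positivity
  have hρ1 : ρ ≤ 1 := Real.rpow_le_one_of_one_le_of_nonpos hR (by norm_num)
  have hslab : Slab n w ρ 0 2 f := by
    refine ⟨hf, hlast, fun ξ hξ => ?_⟩
    have := hf.supp hξ
    have h1 := this.1 0
    have h2 := this.2 0
    simp at h1 h2
    constructor <;> linarith
  have h1 := hP R w ρ hR hρ0.le hρ1 0 f hslab
  have h2 := L2_est n hf hR0
  set I := ∫⁻ ξ, ‖f ξ‖ₑ with hI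
  have hEm : Measurable (EE n f) := EE_measurable n hf.meas
  calc ∫⁻ x in Metric.ball (0 : Fin (n + 1 + n) → ℝ) R, ‖EE n f x‖ₑ ^ p
      = ∫⁻ x in Metric.ball (0 : Fin (n + 1 + n) → ℝ) R,
          (‖EE n f x‖ₑ ^ 2) ^ (1 - θ) * (‖EE n f x‖ₑ ^ (n + 3)) ^ θ := by
        congr 1; ext x
        rw [← ENNReal.rpow_natCast, ← ENNReal.rpow_natCast, ← ENNReal.rpow_mul, ← ENNReal.rpow_mul,
          ← ENNReal.rpow_add_of_nonneg _ _ (by apply mul_nonneg <;> simp [hθ1])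
            (by positivity)]
        congr 1
        push_cast
        linarith
    _ ≤ (∫⁻ x in Metric.ball (0 : Fin (n + 1 + n) → ℝ) R, ‖EE n f x‖ₑ ^ 2) ^ (1 - θ) *
        (∫⁻ x in Metric.ball (0 : Fin (n + 1 + n) → ℝ) R, ‖EE n f x‖ₑ ^ (n + 3)) ^ θ := by
        exact ENNReal.lintegral_mul_norm_pow_le (hEm.enorm.pow_const _).aemeasurable
          (hEm.enorm.pow_const _).aemeasurable (by linarith) hθ0 (by ring)
    _ ≤ (ENNReal.ofReal D * (ENNReal.ofReal R ^ n * I)) ^ (1 - θ) *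
        (ENNReal.ofReal (C0 * R ^ ε * ρ ^ (n + 1)) * I) ^ θ := by
        gcongr
    _ = ENNReal.ofReal ((D * R ^ n) ^ (1 - θ) * (C0 * R ^ ε * ρ ^ (n + 1)) ^ θ) * I := by
        rw [← mul_assoc, ← ENNReal.ofReal_pow hR0.le, ← ENNReal.ofReal_mul hD0.le,
          ENNReal.mul_rpow_of_nonneg _ _ (by linarith), ENNReal.mul_rpow_of_nonneg _ _ hθ0,
          ENNReal.ofReal_rpow_of_nonneg (by positivity) (by linarith),
          ENNReal.ofReal_rpow_of_nonneg (by positivity) hθ0, mul_mul_mul_comm,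
          ← ENNReal.ofReal_mul (by positivity),
          ← ENNReal.rpow_add_of_nonneg _ _ (by linarith) hθ0]
        simp
    _ ≤ _ := by
        refine mul_le_mul_left (ENNReal.ofReal_le_ofReal ?_) _
        rw [Real.mul_rpow hD0.le (by positivity), Real.mul_rpow (by positivity) (by positivity),
          Real.mul_rpow (by positivity) (by positivity), hρ]
        rw [← Real.rpow_natCast, ← Real.rpow_natCast, ← Real.rpow_mul hR0.le, ← Real.rpow_mul hR0.le,
          ← Real.rpow_mul hR0.le, ← Real.rpow_mul hR0.le]
        calc _ = D ^ (1 - θ) * C0 ^ θ * (R ^ (n * (1 - θ)) * (R ^ (ε * θ) *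
              R ^ (-(1 / 2) * ((n + 1 : ℕ) : ℝ) * θ))) := by ring
          _ ≤ _ := by
            rw [← Real.rpow_add hR0, ← Real.rpow_add hR0]
            refine mul_le_mul_of_nonneg_left (Real.rpow_le_rpow_of_exponent_le hR ?_) (by positivity)
            · have e1 : ((n : ℝ) ^ 2 + 4 * n + 1) / ((n : ℝ) + 1) -
                p * (3 * (n : ℝ) + 1) / (2 * ((n : ℝ) + 1)) = n * (1 - θ) - (1 / 2) * (n + 1) * θ := by
                rw [hθ]; field_simp; ring
              rw [e1]
              push_cast
              nlinarith


/-- homogeneity of the estimate for bounded functions -/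
lemma piece_bound (n : ℕ) (P : Set (Fin (n + 1) → ℝ)) (R p : ℝ) (hp : 2 ≤ p) (X : ℝ≥0∞)
    (hX : ∀ g, Adm n g → (∀ ξ, g ξ ≠ 0 → ξ ∈ P) →
      ∫⁻ x in Metric.ball (0 : Fin (n + 1 + n) → ℝ) R, ‖EE n g x‖ₑ ^ p ≤ X * ∫⁻ ξ, ‖g ξ‖ₑ)
    {h : ℝ} (hh : 0 < h) {g : (Fin (n + 1) → ℝ) → ℂ} (hg : Measurable g)
    (hgs : Function.support g ⊆ Set.Icc 0 1) (hgP : ∀ ξ, g ξ ≠ 0 → ξ ∈ P) (hgh : ∀ ξ, ‖g ξ‖ ≤ h) :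
    ∫⁻ x in Metric.ball (0 : Fin (n + 1 + n) → ℝ) R, ‖EE n g x‖ₑ ^ p ≤
      X * (ENNReal.ofReal h ^ (p - 1) * ∫⁻ ξ, ‖g ξ‖ₑ) := by
  set g' : (Fin (n + 1) → ℝ) → ℂ := fun ξ => ((h⁻¹ : ℝ) : ℂ) * g ξ with hg'
  have hgg : ∀ ξ, g ξ = (h : ℂ) * g' ξ := by
    intro ξ
    have : (h : ℂ) ≠ 0 := by exact_mod_cast hh.ne'
    simp only [hg']
    push_cast
    field_simp
  have hne : ∀ ξ, g' ξ ≠ 0 → g ξ ≠ 0 := by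
    intro ξ h1 h2
    apply h1
    simp [hg', h2]
  have hen : ‖(h : ℂ)‖ₑ = ENNReal.ofReal h := by
    rw [← ofReal_norm, Complex.norm_real, Real.norm_of_nonneg hh.le]
  have hA : Adm n g' := by
    refine ⟨by fun_prop, fun ξ => ?_, fun ξ hξ => hgs (hne ξ hξ)⟩
    simp only [hg', norm_mul, Complex.norm_real, Real.norm_of_nonneg (inv_pos.mpr hh).le]
    rw [inv_mul_le_iff₀ hh, mul_one]
    exact hgh ξ
  have h1 := hX g' hA (fun ξ hξ => hgP ξ (hne ξ hξ))
  have hE : ∀ x, EE n g x = (h : ℂ) * EE n g' x := by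
    intro x
    unfold EE
    rw [← integral_const_mul]
    congr 1; ext ξ
    rw [hgg ξ]; ring
  have hI : ∫⁻ ξ, ‖g ξ‖ₑ = ENNReal.ofReal h * ∫⁻ ξ, ‖g' ξ‖ₑ := by
    rw [← lintegral_const_mul _ hA.meas.enorm]
    congr 1; ext ξ
    rw [hgg ξ, enorm_mul, hen]
  calc _ = ENNReal.ofReal h ^ p * ∫⁻ x in Metric.ball (0 : Fin (n + 1 + n) → ℝ) R,
        ‖EE n g' x‖ₑ ^ p := by
        rw [← lintegral_const_mul _ ((EE_measurable n hA.meas).enorm.pow_const _)]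
        congr 1; ext x
        rw [hE x, enorm_mul, hen, ENNReal.mul_rpow_of_nonneg _ _ (by linarith)]
    _ ≤ ENNReal.ofReal h ^ p * (X * ∫⁻ ξ, ‖g' ξ‖ₑ) := by gcongr
    _ = _ := by
        rw [hI]
        have : ENNReal.ofReal h ^ p = ENNReal.ofReal h ^ (p - 1) * ENNReal.ofReal h := by
          conv_lhs => rw [show p = (p - 1) + 1 by ring]
          rw [ENNReal.rpow_add_of_nonneg _ _ (by linarith) (by norm_num), ENNReal.rpow_one]
        rw [this]; ring

lemma eLp_ofReal {α : Type*} [MeasurableSpace α] (μ : Measure α) (F : α → ℂ) {p : ℝ} (hp : 0 < p) :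
    eLpNorm F (ENNReal.ofReal p) μ = (∫⁻ x, ‖F x‖ₑ ^ p ∂μ) ^ (1 / p) := by
  rw [eLpNorm_eq_lintegral_rpow_enorm_toReal (by simpa using hp) (by simp),
    ENNReal.toReal_ofReal hp.le]

lemma eLp_le {α : Type*} [MeasurableSpace α] (μ : Measure α) (F : α → ℂ) {p : ℝ} (hp : 0 < p)
    {Y L : ℝ≥0∞} (h : ∫⁻ x, ‖F x‖ₑ ^ p ∂μ ≤ Y * L ^ p) :
    eLpNorm F (ENNReal.ofReal p) μ ≤ Y ^ (1 / p) * L := by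
  rw [eLp_ofReal μ F hp]
  calc _ ≤ (Y * L ^ p) ^ (1 / p) := by gcongr
    _ = _ := by
      rw [ENNReal.mul_rpow_of_nonneg _ _ (by positivity), ← ENNReal.rpow_mul,
        mul_one_div_cancel hp.ne', ENNReal.rpow_one]

lemma EE_add' (n : ℕ) {f g : (Fin (n + 1) → ℝ) → ℂ} (hf : Integrable f) (hg : Integrable g) :
    EE n (fun ξ => f ξ + g ξ) = EE n f + EE n g := by
  ext x
  have hPi : ∀ i, Measurable fun u => Ph n u i :=
    fun i => (measurable_pi_apply i).comp (Ph_measurable n)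
  have hee : Measurable ee := ee_cont.measurable
  have hI : ∀ f : (Fin (n + 1) → ℝ) → ℂ, Integrable f →
      Integrable (fun ξ => f ξ * ee (∑ i, x i * Ph n ξ i)) := fun f hf =>
    hf.mul_bdd (c := 1) (Measurable.aestronglyMeasurable (by fun_prop))
      (Filter.Eventually.of_forall fun ξ => (ee_norm _).le)
  simp only [Pi.add_apply]
  unfold EE
  rw [← integral_add (hI f hf) (hI g hg)]
  congr 1; ext ξ; ring

/-- truncation of the modulus to an interval -/
lemma trunc_meas {n : ℕ} {f : (Fin (n + 1) → ℝ) → ℂ} (hf : Measurable f) (a b : ℝ) :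
    MeasurableSet {ξ | a < ‖f ξ‖ ∧ ‖f ξ‖ ≤ b} :=
  (measurableSet_lt measurable_const hf.norm).inter (measurableSet_le hf.norm measurable_const)

lemma mul_rpow_self (x : ℝ≥0∞) {p : ℝ} (hp : 2 ≤ p) : x * x ^ (p - 1) = x ^ p := by
  conv_rhs => rw [show p = 1 + (p - 1) by ring]
  rw [ENNReal.rpow_add_of_nonneg _ _ (by norm_num) (by linarith), ENNReal.rpow_one]

/-- passage from bounded functions to general functions -/
lemma levels (n : ℕ) (P : Set (Fin (n + 1) → ℝ)) (R p : ℝ) (hR : 0 < R) (hp : 2 ≤ p) (X : ℝ≥0∞)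
    (hX : ∀ g, Adm n g → (∀ ξ, g ξ ≠ 0 → ξ ∈ P) →
      ∫⁻ x in Metric.ball (0 : Fin (n + 1 + n) → ℝ) R, ‖EE n g x‖ₑ ^ p ≤ X * ∫⁻ ξ, ‖g ξ‖ₑ)
    {l r : ℝ} (hl : 0 < l) (hr : 1 ≤ r) (N : ℕ) {f : (Fin (n + 1) → ℝ) → ℂ} (hf : Measurable f)
    (hfi : Integrable f)
    (hfs : Function.support f ⊆ Set.Icc 0 1) (hfP : ∀ ξ, f ξ ≠ 0 → ξ ∈ P)
    (hfl : ∫⁻ ξ, ‖f ξ‖ₑ ^ p = ENNReal.ofReal l ^ p) :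
    eLpNorm (EE n ({ξ | -1 < ‖f ξ‖ ∧ ‖f ξ‖ ≤ l * r ^ N}.indicator f)) (ENNReal.ofReal p)
      (volume.restrict (Metric.ball 0 R)) ≤
      (N + 1) * ((X * ENNReal.ofReal r ^ (p - 1)) ^ (1 / p) * ENNReal.ofReal l) := by
  have hp0 : 0 < p := by linarith
  have hr0 : 0 < r := by linarith
  have key : ∀ a b : ℝ, 0 < b → ENNReal.ofReal b ^ (p - 1) *
      (∫⁻ ξ, ‖{ξ | a < ‖f ξ‖ ∧ ‖f ξ‖ ≤ b}.indicator f ξ‖ₑ) ≤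
        ENNReal.ofReal r ^ (p - 1) * ENNReal.ofReal l ^ p →
      eLpNorm (EE n ({ξ | a < ‖f ξ‖ ∧ ‖f ξ‖ ≤ b}.indicator f)) (ENNReal.ofReal p)
      (volume.restrict (Metric.ball 0 R)) ≤
      (X * ENNReal.ofReal r ^ (p - 1)) ^ (1 / p) * ENNReal.ofReal l := by
    intro a b hb h
    apply eLp_le _ _ hp0
    have hne : ∀ ξ, {ξ | a < ‖f ξ‖ ∧ ‖f ξ‖ ≤ b}.indicator f ξ ≠ 0 → f ξ ≠ 0 := by
      intro ξ h1 h2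
      apply h1
      simp [Set.indicator_apply, h2]
    refine (piece_bound n P R p hp X hX hb (hf.indicator (trunc_meas hf a b))
      (fun ξ hξ => hfs (hne ξ hξ)) (fun ξ hξ => hfP ξ (hne ξ hξ)) ?_).trans ?_
    · intro ξ
      by_cases hξ : ξ ∈ {ξ | a < ‖f ξ‖ ∧ ‖f ξ‖ ≤ b}
      · rw [Set.indicator_of_mem hξ]; exact hξ.2
      · rw [Set.indicator_of_notMem hξ]; simp [hb.le]
    · rw [mul_assoc X]
      gcongr
  have hintg : ∀ a b : ℝ, Integrable ({ξ | a < ‖f ξ‖ ∧ ‖f ξ‖ ≤ b}.indicator f) :=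
    fun a b => hfi.indicator (trunc_meas hf a b)
  induction N with
  | zero =>
    simp only [Nat.cast_zero, zero_add, one_mul, pow_zero, mul_one]
    apply key _ _ hl
    calc _ ≤ ENNReal.ofReal l ^ (p - 1) * ENNReal.ofReal l := by
          gcongr
          calc _ ≤ ∫⁻ ξ, (Set.Icc (0 : Fin (n + 1) → ℝ) 1).indicator (fun _ => ENNReal.ofReal l) ξ := by
                apply lintegral_mono
                intro ξ
                by_cases hξ : f ξ = 0
                · simp [Set.indicator_apply, hξ]
                · have := hfs hξ
                  dsimp only
                  rw [Set.indicator_of_mem this]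
                  by_cases h2 : ξ ∈ {ξ | -1 < ‖f ξ‖ ∧ ‖f ξ‖ ≤ l}
                  · rw [Set.indicator_of_mem h2, ← ofReal_norm]
                    exact ENNReal.ofReal_le_ofReal h2.2
                  · rw [Set.indicator_of_notMem h2]; simp
            _ = ENNReal.ofReal l := by
                rw [lintegral_indicator_const measurableSet_Icc, Real.volume_Icc_pi]
                simp
      _ = 1 * ENNReal.ofReal l ^ p := by rw [mul_comm, mul_rpow_self _ hp, one_mul]
      _ ≤ _ := by
          gcongr
          apply ENNReal.one_le_rpow
          · simpa using hr
          · linarith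
  | succ N ih =>
    have hsplit : {ξ | -1 < ‖f ξ‖ ∧ ‖f ξ‖ ≤ l * r ^ (N + 1)}.indicator f =
        fun ξ => {ξ | -1 < ‖f ξ‖ ∧ ‖f ξ‖ ≤ l * r ^ N}.indicator f ξ +
          {ξ | l * r ^ N < ‖f ξ‖ ∧ ‖f ξ‖ ≤ l * r ^ (N + 1)}.indicator f ξ := by
      ext ξ
      have h0 : -1 < ‖f ξ‖ := by have := norm_nonneg (f ξ); linarith
      have h1 : l * r ^ N ≤ l * r ^ (N + 1) := by
        exact mul_le_mul_of_nonneg_left (pow_le_pow_right₀ hr (by omega)) hl.le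
      simp only [Set.indicator_apply, Set.mem_ofPred_eq, h0, true_and]
      by_cases h2 : ‖f ξ‖ ≤ l * r ^ N
      · simp [h2, h2.trans h1, not_lt.mpr h2]
      · simp [h2, not_le.mp h2]
    rw [hsplit, EE_add' n (hintg _ _) (hintg _ _)]
    refine (eLpNorm_add_le (EE_measurable n (hf.indicator (trunc_meas hf _ _))).aestronglyMeasurable
      (EE_measurable n (hf.indicator (trunc_meas hf _ _))).aestronglyMeasurable
      (by rw [← ENNReal.ofReal_one]; exact ENNReal.ofReal_le_ofReal (by linarith))).trans ?_
    refine (add_le_add ih (key (l * r ^ N) (l * r ^ (N + 1)) (by positivity) ?_)).trans (le_of_eq ?_)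
    · rw [← lintegral_const_mul _ (hf.indicator (trunc_meas hf _ _)).enorm, ← hfl,
        ← lintegral_const_mul _ (hf.enorm.pow_const _)]
      apply lintegral_mono
      intro ξ
      dsimp only
      by_cases hξ : ξ ∈ {ξ | l * r ^ N < ‖f ξ‖ ∧ ‖f ξ‖ ≤ l * r ^ (N + 1)}
      · rw [Set.indicator_of_mem hξ, show l * r ^ (N + 1) = r * (l * r ^ N) by ring,
          ENNReal.ofReal_mul hr0.le, ENNReal.mul_rpow_of_nonneg _ _ (by linarith), mul_assoc,
          ← mul_rpow_self _ hp, mul_comm ‖f ξ‖ₑ]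
        have h3 : ENNReal.ofReal (l * r ^ N) ≤ ‖f ξ‖ₑ := by
          rw [← ofReal_norm]
          exact ENNReal.ofReal_le_ofReal hξ.1.le
        have h4 : 0 ≤ p - 1 := by linarith
        gcongr
      · rw [Set.indicator_of_notMem hξ]; simp
    · push_cast; ring

/-- the part of large modulus -/
lemma high_part (n : ℕ) (R p : ℝ) (hR : 1 ≤ R) (hp : 2 ≤ p)
    {l q : ℝ} (hl : 0 < l) (hq : 1 ≤ q) {f : (Fin (n + 1) → ℝ) → ℂ} (hf : Measurable f)
    (hfl : ∫⁻ ξ, ‖f ξ‖ₑ ^ p = ENNReal.ofReal l ^ p) :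
    eLpNorm (EE n ({ξ | l * q < ‖f ξ‖}.indicator f)) (ENNReal.ofReal p)
      (volume.restrict (Metric.ball 0 R)) ≤
      ENNReal.ofReal ((2 * R) ^ (n + 1 + n) / q) * ENNReal.ofReal l := by
  have hp0 : 0 < p := by linarith
  have hq0 : 0 < q := by linarith
  have hm : MeasurableSet {ξ | l * q < ‖f ξ‖} := measurableSet_lt measurable_const hf.norm
  set L := ENNReal.ofReal l with hL
  have hL0 : L ≠ 0 := by simpa [hL] using hl
  have hLt : L ≠ ⊤ := by simp [hL]
  have h1 : L ^ (p - 1) * (ENNReal.ofReal q * ∫⁻ ξ, ‖{ξ | l * q < ‖f ξ‖}.indicator f ξ‖ₑ) ≤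
      L ^ (p - 1) * L := by
    rw [mul_comm _ L, mul_rpow_self _ hp, ← hfl, ← mul_assoc,
      ← lintegral_const_mul _ (hf.indicator hm).enorm]
    apply lintegral_mono
    intro ξ
    dsimp only
    by_cases hξ : ξ ∈ {ξ | l * q < ‖f ξ‖}
    · rw [Set.indicator_of_mem hξ, ← mul_rpow_self _ hp, mul_comm ‖f ξ‖ₑ]
      gcongr
      calc L ^ (p - 1) * ENNReal.ofReal q ≤ L ^ (p - 1) * ENNReal.ofReal q ^ (p - 1) := by
            gcongr
            conv_lhs => rw [← ENNReal.rpow_one (ENNReal.ofReal q)]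
            exact ENNReal.rpow_le_rpow_of_exponent_le (by simpa using hq) (by linarith)
        _ = ENNReal.ofReal (l * q) ^ (p - 1) := by
            rw [ENNReal.ofReal_mul hl.le, ENNReal.mul_rpow_of_nonneg _ _ (by linarith)]
        _ ≤ ‖f ξ‖ₑ ^ (p - 1) := by
            have : l * q < ‖f ξ‖ := hξ
            rw [← ofReal_norm]
            gcongr
            linarith
    · rw [Set.indicator_of_notMem hξ]; simp
  have h2 : ENNReal.ofReal q * ∫⁻ ξ, ‖{ξ | l * q < ‖f ξ‖}.indicator f ξ‖ₑ ≤ L :=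
    (ENNReal.mul_le_mul_iff_right (by simp [hL0, hLt]) (by
      exact ENNReal.rpow_ne_top_of_nonneg (by linarith) hLt)).mp h1
  have h3 : ∫⁻ ξ, ‖{ξ | l * q < ‖f ξ‖}.indicator f ξ‖ₑ ≤ ENNReal.ofReal q⁻¹ * L := by
    calc _ = ENNReal.ofReal q⁻¹ * (ENNReal.ofReal q *
          ∫⁻ ξ, ‖{ξ | l * q < ‖f ξ‖}.indicator f ξ‖ₑ) := by
          rw [← mul_assoc, ← ENNReal.ofReal_mul (by positivity), inv_mul_cancel₀ hq0.ne']
          simp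
      _ ≤ _ := by gcongr
  set V := ENNReal.ofReal ((2 * R) ^ (n + 1 + n)) with hV
  have hV1 : 1 ≤ V := by
    rw [hV, ENNReal.one_le_ofReal]
    exact one_le_pow₀ (by linarith)
  calc _ ≤ V ^ (1 / p) * (ENNReal.ofReal q⁻¹ * L) := by
        apply eLp_le _ _ hp0
        calc _ ≤ ∫⁻ x in Metric.ball (0 : Fin (n + 1 + n) → ℝ) R, (ENNReal.ofReal q⁻¹ * L) ^ p := by
              apply lintegral_mono
              intro x
              dsimp only
              gcongr
              exact (EE_enorm_le n _ x).trans h3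
          _ = _ := by
              rw [setLIntegral_const, Real.volume_pi_ball _ (by linarith), mul_comm]
              simp [hV]
    _ ≤ V * (ENNReal.ofReal q⁻¹ * L) := by
        gcongr
        conv_rhs => rw [← ENNReal.rpow_one V]
        exact ENNReal.rpow_le_rpow_of_exponent_le hV1 (by rw [div_le_one hp0]; linarith)
    _ = _ := by
        rw [← mul_assoc, hV, ← ENNReal.ofReal_mul (by positivity), ← div_eq_mul_inv]


lemma main_EE (n : ℕ) (hn : 2 ≤ n)
    (ε : ℝ) (hε : 0 < ε) (p : ℝ) (hp2 : 2 ≤ p) (hpn : p ≤ (n : ℝ) + 3) :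
    ∃ C : ℝ, 0 < C ∧
      ∀ R : ℝ, 1 ≤ R → ∀ c : ℝ,
      ∀ f : (Fin (n + 1) → ℝ) → ℂ, Measurable f →
        Function.support f ⊆ Set.Icc 0 1 →
        (∀ ξ, f ξ ≠ 0 → ξ (Fin.last n) ∈ Set.Icc c (c + R ^ (-(1/2) : ℝ))) →
        eLpNorm (EE n f) (ENNReal.ofReal p)
          (volume.restrict (Metric.ball (0 : Fin ((n + 1) + n) → ℝ) R)) ≤
        ENNReal.ofReal C * ENNReal.ofReal
            (R ^ (((n : ℝ) ^ 2 + 4 * n + 1) / (((n : ℝ) + 1) * p) -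
              (3 * (n : ℝ) + 1) / (2 * ((n : ℝ) + 1)) + ε)) *
          eLpNorm f (ENNReal.ofReal p) volume := by
  have hp0 : 0 < p := by linarith
  have hn1 : (0 : ℝ) < n + 1 := by positivity
  obtain ⟨C, hC, hI⟩ := interp n hn ε hε p hp2 hpn
  set E : ℝ := ((n : ℝ) ^ 2 + 4 * n + 1) / ((n : ℝ) + 1) -
              p * (3 * (n : ℝ) + 1) / (2 * ((n : ℝ) + 1)) with hE
  set e : ℝ := ((n : ℝ) ^ 2 + 4 * n + 1) / (((n : ℝ) + 1) * p) -
              (3 * (n : ℝ) + 1) / (2 * ((n : ℝ) + 1)) with he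
  have hEe : E = p * e := by
    rw [hE, he]; field_simp
  obtain ⟨N, hN⟩ := exists_nat_ge ((2 * n + 1 - e) / ε)
  rw [div_le_iff₀ hε] at hN
  refine ⟨(N + 1) * C ^ (1 / p) + 2 ^ (n + 1 + n), by positivity, ?_⟩
  intro R hR c f hf hfs hlast
  have hR0 : 0 < R := by linarith
  set L := eLpNorm f (ENNReal.ofReal p) volume with hL
  have hRe : 0 < R ^ (e + ε) := by positivity
  by_cases hLt : L = ⊤
  · rw [hLt, ENNReal.mul_top]
    · exact le_top
    · simp only [ne_eq, mul_eq_zero, ENNReal.ofReal_eq_zero, not_or, not_le]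
      exact ⟨by positivity, hRe⟩
  have hp1 : 1 ≤ ENNReal.ofReal p := by
    rw [ENNReal.one_le_ofReal]; linarith
  by_cases hL0 : L = 0
  · rw [hL0, mul_zero, nonpos_iff_eq_zero]
    have h0 := (eLpNorm_eq_zero_iff hf.aestronglyMeasurable (by simpa using hp0)).mp hL0
    have : EE n f = 0 := by
      ext x
      unfold EE
      rw [integral_eq_zero_of_ae]
      · rfl
      · filter_upwards [h0] with ξ hξ
        simp [hξ]
    rw [this]
    exact eLpNorm_zero
  set l := L.toReal with hl
  have hl0 : 0 < l := ENNReal.toReal_pos hL0 hLt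
  have hLl : L = ENNReal.ofReal l := (ENNReal.ofReal_toReal hLt).symm
  have hfl : ∫⁻ ξ, ‖f ξ‖ₑ ^ p = ENNReal.ofReal l ^ p := by
    rw [← hLl, hL, eLp_ofReal _ _ hp0, ← ENNReal.rpow_mul, one_div_mul_cancel hp0.ne',
      ENNReal.rpow_one]
  have hfi : Integrable f := by
    have hmem : MemLp f (ENNReal.ofReal p) volume :=
      ⟨hf.aestronglyMeasurable, lt_top_iff_ne_top.mpr hLt⟩
    have h1 : IntegrableOn f (Set.Icc 0 1) := by
      have hfin : IsFiniteMeasure (volume.restrict (Set.Icc (0 : Fin (n + 1) → ℝ) 1)) :=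
        ⟨by simpa using isCompact_Icc.measure_lt_top⟩
      exact (hmem.restrict _).integrable hp1
    exact (integrableOn_iff_integrable_of_support_subset hfs).mp h1
  set r := R ^ ε with hr
  have hr1 : 1 ≤ r := Real.one_le_rpow hR hε.le
  have hr0 : 0 < r := by linarith
  have hlow := levels n {ξ | ξ (Fin.last n) ∈ Set.Icc c (c + R ^ (-(1/2) : ℝ))} R p hR0 hp2
    (ENNReal.ofReal (C * R ^ (E + ε))) (fun g hg hgP => hI R c hR g hg hgP) hl0 hr1 N hf hfi hfs
    hlast hfl
  have hhigh := high_part n R p hR hp2 hl0 (one_le_pow₀ hr1 (n := N)) hf hfl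
  have hmH : MeasurableSet {ξ | l * r ^ N < ‖f ξ‖} := measurableSet_lt measurable_const hf.norm
  have hsplit : f = fun ξ => {ξ | -1 < ‖f ξ‖ ∧ ‖f ξ‖ ≤ l * r ^ N}.indicator f ξ +
      {ξ | l * r ^ N < ‖f ξ‖}.indicator f ξ := by
    ext ξ
    have h0 : -1 < ‖f ξ‖ := by have := norm_nonneg (f ξ); linarith
    by_cases h2 : ‖f ξ‖ ≤ l * r ^ N
    · simp [Set.indicator_apply, h0, h2, not_lt.mpr h2]
    · simp [Set.indicator_apply, h2, not_le.mp h2]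
  have hEE : EE n f = EE n ({ξ | -1 < ‖f ξ‖ ∧ ‖f ξ‖ ≤ l * r ^ N}.indicator f) +
      EE n ({ξ | l * r ^ N < ‖f ξ‖}.indicator f) := by
    rw [← EE_add' n (hfi.indicator (trunc_meas hf _ _)) (hfi.indicator hmH), ← hsplit]
  rw [hEE]
  refine (eLpNorm_add_le (EE_measurable n (hf.indicator (trunc_meas hf _ _))).aestronglyMeasurable
      (EE_measurable n (hf.indicator hmH)).aestronglyMeasurable hp1).trans ?_
  refine (add_le_add hlow hhigh).trans ?_
  rw [← mul_assoc, ← add_mul, hLl]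
  refine mul_le_mul_left ?_ _
  have e1 : ((N : ℝ≥0∞) + 1) = ENNReal.ofReal (N + 1) := by
    rw [ENNReal.ofReal_add (by positivity) (by norm_num)]; simp
  rw [e1, ENNReal.ofReal_rpow_of_pos hr0, ← ENNReal.ofReal_mul (by positivity),
    ENNReal.ofReal_rpow_of_nonneg (by positivity) (by positivity),
    ← ENNReal.ofReal_mul (by positivity), ← ENNReal.ofReal_add (by positivity) (by positivity),
    ← ENNReal.ofReal_mul (by positivity)]
  apply ENNReal.ofReal_le_ofReal
  rw [add_mul (((N : ℝ) + 1) * C ^ (1 / p))]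
  apply add_le_add
  · apply le_of_eq
    rw [mul_assoc C, mul_assoc ((N : ℝ) + 1), Real.mul_rpow hC (by positivity), hr, ← Real.rpow_mul hR0.le,
      ← Real.rpow_add hR0, ← Real.rpow_mul hR0.le]
    congr 3
    rw [hEe]; field_simp; ring
  · rw [mul_pow, mul_div_assoc]
    gcongr
    rw [div_le_iff₀ (by positivity), hr, ← Real.rpow_natCast, ← Real.rpow_natCast,
      ← Real.rpow_mul hR0.le, ← Real.rpow_add hR0]
    apply Real.rpow_le_rpow_of_exponent_le hR
    push_cast
    nlinarith


/-- for the surface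
`Q(ξ) = (ξ₁², ξ₁ξ₂, …, ξ₁ξ_{n-1}, ξ₁ξ_n + ξ_{n+1}²)` on `ℝ^{n+1}`
(0-indexed in Lean: `Q_j = ξ_0 ξ_j` for `j < n-1` and
`Q_{n-1} = ξ_0 ξ_{n-1} + ξ_n²`), a restriction estimate for functions
supported in a slab of width `R^{-1/2}` in the last variable. -/
theorem statement18 (n : ℕ) (hn : 2 ≤ n)
    (ε : ℝ) (hε : 0 < ε) (p : ℝ) (hp2 : 2 ≤ p) (hpn : p ≤ (n : ℝ) + 3) :
    ∃ C : ℝ≥0∞, C < ⊤ ∧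
      ∀ R : ℝ, 1 ≤ R →
      ∀ c : ℝ, 0 ≤ c → c + R ^ (-(1/2) : ℝ) ≤ 1 →
      ∀ f : (Fin (n + 1) → ℝ) → ℂ, Measurable f →
        Function.support f ⊆ Set.Icc 0 1 ∩
          {ξ : Fin (n + 1) → ℝ |
            ξ ⟨n, by omega⟩ ∈ Set.Icc c (c + R ^ (-(1/2) : ℝ))} →
        eLpNorm
          (extOp (n + 1) n (fun ξ j =>
            ξ ⟨0, by omega⟩ * ξ ⟨(j : ℕ), by have := j.isLt; omega⟩ +
              (if (j : ℕ) = n - 1 then ξ ⟨n, by omega⟩ ^ 2 else 0)) f)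
          (ENNReal.ofReal p)
          (volume.restrict (Metric.ball (0 : Fin ((n + 1) + n) → ℝ) R)) ≤
        C * ENNReal.ofReal
            (R ^ (((n : ℝ) ^ 2 + 4 * n + 1) / (((n : ℝ) + 1) * p) -
              (3 * (n : ℝ) + 1) / (2 * ((n : ℝ) + 1)) + ε)) *
          eLpNorm f (ENNReal.ofReal p) volume := by
  obtain ⟨C, hC, h⟩ := main_EE n hn ε hε p hp2 hpn
  refine ⟨ENNReal.ofReal C, ENNReal.ofReal_lt_top, ?_⟩
  intro R hR c _ _ f hf hfs
  rw [extOp_eq n f (fun ξ hξ => (hfs hξ).1)]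
  exact h R hR c f hf (fun ξ hξ => (hfs hξ).1) (fun ξ hξ => (hfs hξ).2)
end
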